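/- Let k be a field and let T = {(x,y) ∈ ℝ² : x + y > 0} be the strictly upper-triangular subposet of ℝ². Every pointwise finite-dimensional, middle exact persistence module M : T → Vec_k is isomorphic to a direct sum of modules k_{J ∩ T}, where each J ⊆ ℝ² is a block. -/

import Mathlib

namespace PMod

variable (k : Type) [Field k]

/-- A persistence module over a preordered set `P` with values in `k`-vector spaces. -/
structure PersistenceModule (P : Type) [Preorder P] where
  V : P → Type
  [addCommGroup : ∀ x, AddCommGroup (V x)]
  [module : ∀ x, Module k (V x)]
  map : ∀ {x y : P}, x ≤ y → (V x →ₗ[k] V y)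
  map_refl : ∀ x : P, map (le_refl x) = LinearMap.id
  map_trans : ∀ {x y z : P} (hxy : x ≤ y) (hyz : y ≤ z),
      map (le_trans hxy hyz) = (map hyz).comp (map hxy)

attribute [instance] PersistenceModule.addCommGroup PersistenceModule.module

variable {k}

/-- A morphism of persistence modules. -/
structure Hom {P : Type} [Preorder P] (M N : PersistenceModule k P) where
  app : ∀ x, M.V x →ₗ[k] N.V x
  natural : ∀ {x y : P} (h : x ≤ y), (N.map h).comp (app x) = (app y).comp (M.map h)

/-- A morphism of persistence modules is an isomorphism iff it is pointwise bijective. -/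
def IsIsoHom {P : Type} [Preorder P] {M N : PersistenceModule k P} (f : Hom M N) : Prop :=
  ∀ x, Function.Bijective (f.app x)

/-- Two persistence modules are isomorphic if there is a pointwise bijective
morphism between them. -/
def Isomorphic {P : Type} [Preorder P] (M N : PersistenceModule k P) : Prop :=
  ∃ f : Hom M N, IsIsoHom f

/-- The direct sum of a family of persistence modules, taken pointwise
(`Π₀` is the finitely supported product, i.e. the direct sum). -/
noncomputable def directSum {P : Type} [Preorder P] {ι : Type}
    (N : ι → PersistenceModule k P) : PersistenceModule k P where
  V x := Π₀ i, (N i).V x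
  map {x y} h := DFinsupp.mapRange.linearMap (fun i => (N i).map h)
  map_refl x := by
    have h : (fun i => (N i).map (le_refl x)) =
        fun i => (LinearMap.id : (N i).V x →ₗ[k] (N i).V x) :=
      funext fun i => (N i).map_refl x
    rw [h]
    exact DFinsupp.mapRange.linearMap_id
  map_trans {x y z} hxy hyz := by
    have h : (fun i => (N i).map (le_trans hxy hyz)) =
        fun i => ((N i).map hyz).comp ((N i).map hxy) :=
      funext fun i => (N i).map_trans hxy hyz
    rw [h]
    exact DFinsupp.mapRange.linearMap_comp _ _

/-- The binary direct sum of two persistence modules, taken pointwise. -/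
def sum2 {P : Type} [Preorder P] (M N : PersistenceModule k P) : PersistenceModule k P where
  V x := M.V x × N.V x
  map h := (M.map h).prodMap (N.map h)
  map_refl x := by
    rw [M.map_refl, N.map_refl]
    exact LinearMap.prodMap_id
  map_trans hxy hyz := by
    rw [M.map_trans hxy hyz, N.map_trans hxy hyz]
    exact (LinearMap.prodMap_comp _ _ _ _).symm

/-- The zero persistence module predicate. -/
def IsZero {P : Type} [Preorder P] (M : PersistenceModule k P) : Prop :=
  ∀ x, ∀ v : M.V x, v = 0

/-- A persistence module is indecomposable if it is nonzero and whenever it is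
isomorphic to a direct sum of two modules, one of the summands is zero. -/
def Indecomposable {P : Type} [Preorder P] (M : PersistenceModule k P) : Prop :=
  ¬ IsZero M ∧ ∀ M' M'' : PersistenceModule k P,
    Isomorphic M (sum2 M' M'') → IsZero M' ∨ IsZero M''

variable (k)

/-- A subset of a preordered set is convex. -/
def IsConvex {P : Type} [Preorder P] (I : Set P) : Prop :=
  ∀ p q r : P, p ≤ q → q ≤ r → p ∈ I → r ∈ I → q ∈ I

open Classical in
/-- The fibre of the interval module `k_I` at `x`: a copy of `k` if `x ∈ I`, else `0`. -/
noncomputable def kMod {P : Type} [Preorder P] (I : Set P) (x : P) : Submodule k k :=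
  if x ∈ I then ⊤ else ⊥

/-- The canonical generator of the fibre of the interval module at a point of `I`. -/
noncomputable def kGen {P : Type} [Preorder P] {I : Set P} {x : P} (hx : x ∈ I) :
    kMod k I x :=
  ⟨1, by simp [kMod, hx]⟩

open Classical in
/-- The structure maps of the interval module. -/
noncomputable def intervalMap {P : Type} [Preorder P] (I : Set P) {x y : P} (_ : x ≤ y) :
    kMod k I x →ₗ[k] kMod k I y where
  toFun m := if hy : y ∈ I then ⟨(m : k), by simp [kMod, hy]⟩ else 0
  map_add' a b := by
    by_cases hy : y ∈ I <;> simp [hy]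
  map_smul' c a := by
    by_cases hy : y ∈ I <;> simp [hy]

theorem kMod_coe_eq_zero {P : Type} [Preorder P] {I : Set P} {x : P} (hx : x ∉ I)
    (m : kMod k I x) : (m : k) = 0 := by
  have hm := m.2
  simp only [kMod, if_neg hx, Submodule.mem_bot] at hm
  exact hm

/-- The interval module `k_I` of a convex subset `I ⊆ P`: one-dimensional with
identity structure maps on `I`, and zero outside of `I`. -/
noncomputable def intervalModule {P : Type} [Preorder P] (I : Set P) (hI : IsConvex I) :
    PersistenceModule k P where
  V x := kMod k I x
  map h := intervalMap k I h
  map_refl x := by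
    ext m
    by_cases hx : x ∈ I
    · simp [intervalMap, hx]
    · simp [intervalMap, hx, kMod_coe_eq_zero k hx m]
  map_trans {x y z} hxy hyz := by
    ext m
    by_cases hz : z ∈ I
    · by_cases hy : y ∈ I
      · simp [intervalMap, hz, hy]
      · have hx : x ∉ I := fun hx => hy (hI x y z hxy hyz hx hz)
        simp [intervalMap, hz, hy, kMod_coe_eq_zero k hx m]
    · by_cases hy : y ∈ I <;> simp [intervalMap, hz, hy]

/-- The constant persistence module `k_P` with value `k` everywhere. -/
def constModule (P : Type) [Preorder P] : PersistenceModule k P where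
  V _ := k
  map _ := LinearMap.id
  map_refl _ := rfl
  map_trans _ _ := rfl

variable {k}

/-- Connectedness of a subset of a preordered set: any two points are joined by
a finite zigzag of comparable points inside the subset. -/
def IsConn {P : Type} [Preorder P] (I : Set P) : Prop :=
  ∀ p ∈ I, ∀ q ∈ I, ∃ (n : ℕ) (r : ℕ → P), r 0 = p ∧ r n = q ∧ (∀ i ≤ n, r i ∈ I) ∧
    ∀ i < n, r i ≤ r (i + 1) ∨ r (i + 1) ≤ r i

/-- An interval in a poset: a nonempty convex connected subset. -/
def IsInterval {P : Type} [Preorder P] (I : Set P) : Prop :=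
  I.Nonempty ∧ IsConvex I ∧ IsConn I

/-- An ideal: a subset closed under going down. -/
def IsIdeal {P : Type} [Preorder P] (I : Set P) : Prop :=
  ∀ p q : P, p ≤ q → q ∈ I → p ∈ I

/-- A filter: a subset closed under going up. -/
def IsFilter {P : Type} [Preorder P] (I : Set P) : Prop :=
  ∀ p q : P, p ≤ q → p ∈ I → q ∈ I

/-- An interval in a totally ordered set: a nonempty convex subset. -/
def IsIntervalLin {P : Type} [Preorder P] (I : Set P) : Prop :=
  I.Nonempty ∧ IsConvex I

theorem IsConvex.prod {S T : Type} [Preorder S] [Preorder T] {A : Set S} {B : Set T}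
    (hA : IsConvex A) (hB : IsConvex B) : IsConvex (A ×ˢ B) := by
  intro p q r hpq hqr hp hr
  exact ⟨hA _ _ _ hpq.1 hqr.1 hp.1 hr.1, hB _ _ _ hpq.2 hqr.2 hp.2 hr.2⟩

theorem isConvex_univ {P : Type} [Preorder P] : IsConvex (Set.univ : Set P) :=
  fun _ _ _ _ _ _ _ => trivial

/-- A block in the product of two totally ordered sets. -/
def IsBlock {S T : Type} [LinearOrder S] [LinearOrder T] (I : Set (S × T)) : Prop :=
  I.Nonempty ∧ (
    (∃ JS JT, IsIntervalLin JS ∧ IsIdeal JS ∧ IsIntervalLin JT ∧ IsIdeal JT ∧ I = JS ×ˢ JT) ∨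
    (∃ JS JT, IsIntervalLin JS ∧ IsFilter JS ∧ IsIntervalLin JT ∧ IsFilter JT ∧ I = JS ×ˢ JT) ∨
    (∃ JS, IsIntervalLin JS ∧ I = JS ×ˢ (Set.univ : Set T)) ∨
    (∃ JT, IsIntervalLin JT ∧ I = (Set.univ : Set S) ×ˢ JT))

theorem IsBlock.isConvex {S T : Type} [LinearOrder S] [LinearOrder T] {I : Set (S × T)}
    (h : IsBlock I) : IsConvex I := by
  obtain ⟨-, h | h | h | h⟩ := h
  · obtain ⟨JS, JT, hS, -, hT, -, rfl⟩ := h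
    exact hS.2.prod hT.2
  · obtain ⟨JS, JT, hS, -, hT, -, rfl⟩ := h
    exact hS.2.prod hT.2
  · obtain ⟨JS, hS, rfl⟩ := h
    exact hS.2.prod isConvex_univ
  · obtain ⟨JT, hT, rfl⟩ := h
    exact isConvex_univ.prod hT.2

/-- Convexity is inherited by preimages in a subposet. -/
theorem IsConvex.preimage {P : Type} [Preorder P] {J : Set P} (hJ : IsConvex J)
    (Q : Set P) : IsConvex {p : Q | (p : P) ∈ J} :=
  fun p q r hpq hqr hp hr => hJ p q r hpq hqr hp hr

/-- The restriction of a persistence module to a subposet. -/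
def restrict {P : Type} [Preorder P] (M : PersistenceModule k P) (Q : Set P) :
    PersistenceModule k Q where
  V q := M.V q
  map h := M.map h
  map_refl q := M.map_refl q
  map_trans hxy hyz := M.map_trans hxy hyz

/-- Middle exactness for persistence modules over a product of two totally ordered sets:
for every rectangle `a = (x,y) ≤ b = (x,y'), c = (x',y) ≤ d = (x',y')` the sequence
`M_a → M_b ⊕ M_c → M_d` is exact at `M_b ⊕ M_c`. -/
def MiddleExact {S T : Type} [Preorder S] [Preorder T]
    (M : PersistenceModule k (S × T)) : Prop :=
  ∀ (x x' : S) (y y' : T) (hx : x ≤ x') (hy : y ≤ y')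
    (mb : M.V (x, y')) (mc : M.V (x', y)),
    M.map (show (x, y') ≤ (x', y') from ⟨hx, le_refl y'⟩) mb =
      M.map (show (x', y) ≤ (x', y') from ⟨le_refl x', hy⟩) mc →
    ∃ ma : M.V (x, y),
      M.map (show (x, y) ≤ (x, y') from ⟨le_refl x, hy⟩) ma = mb ∧
      M.map (show (x, y) ≤ (x', y) from ⟨hx, le_refl y⟩) ma = mc


theorem IsIdeal.isConvex {P : Type} [Preorder P] {I : Set P} (h : IsIdeal I) : IsConvex I :=
  fun _ q r _ hqr _ hr => h q r hqr hr

theorem IsFilter.isConvex {P : Type} [Preorder P] {I : Set P} (h : IsFilter I) : IsConvex I :=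
  fun p q _ hpq _ hp _ => h p q hpq hp


/-- Convexity of the preimage of a convex subset of `T` in a subposet of `S × T`. -/
theorem IsConvex.preimageSnd {S T : Type} [Preorder S] [Preorder T] {J : Set T}
    (hJ : IsConvex J) (Q : Set (S × T)) : IsConvex {p : ↥Q | (p : S × T).2 ∈ J} :=
  fun p q r hpq hqr hp hr =>
    hJ _ _ _ (Subtype.coe_le_coe.mpr hpq).2 (Subtype.coe_le_coe.mpr hqr).2 hp hr

end PMod

namespace PMod

/-- The strictly upper-triangular subset of the plane. -/
def upperT : Set (ℝ × ℝ) := {p | 0 < p.1 + p.2}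

/-- The upper-triangular subset of the plane. -/
def upperTbar : Set (ℝ × ℝ) := {p | 0 ≤ p.1 + p.2}

/-- Middle exactness for a persistence module over a subposet `Q ⊆ ℝ²`: for every
rectangle `a = (x,y)`, `b = (x,y')`, `c = (x',y)`, `d = (x',y')` with all corners in
`Q`, the sequence `M_a → M_b ⊕ M_c → M_d` is exact at `M_b ⊕ M_c`. -/
def MiddleExactSub {k : Type} [Field k] (Q : Set (ℝ × ℝ))
    (M : PersistenceModule k ↥Q) : Prop :=
  ∀ (x x' y y' : ℝ) (hx : x ≤ x') (hy : y ≤ y')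
    (ha : (x, y) ∈ Q) (hb : (x, y') ∈ Q) (hc : (x', y) ∈ Q) (hd : (x', y') ∈ Q),
    ∀ (mb : M.V ⟨(x, y'), hb⟩) (mc : M.V ⟨(x', y), hc⟩),
      M.map (show (⟨(x, y'), hb⟩ : ↥Q) ≤ ⟨(x', y'), hd⟩ from
        Subtype.mk_le_mk.mpr ⟨hx, le_refl y'⟩) mb =
      M.map (show (⟨(x', y), hc⟩ : ↥Q) ≤ ⟨(x', y'), hd⟩ from
        Subtype.mk_le_mk.mpr ⟨le_refl x', hy⟩) mc →
      ∃ ma : M.V ⟨(x, y), ha⟩,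
        M.map (show (⟨(x, y), ha⟩ : ↥Q) ≤ ⟨(x, y'), hb⟩ from
          Subtype.mk_le_mk.mpr ⟨le_refl x, hy⟩) ma = mb ∧
        M.map (show (⟨(x, y), ha⟩ : ↥Q) ≤ ⟨(x', y), hc⟩ from
          Subtype.mk_le_mk.mpr ⟨hx, le_refl y⟩) ma = mc

/-- Convexity of the preimage in a subposet of a convex subset of `ℝ²`. -/
theorem IsConvex.preimageSub {J : Set (ℝ × ℝ)} (hJ : IsConvex J) (Q : Set (ℝ × ℝ)) :
    IsConvex {p : ↥Q | (p : ℝ × ℝ) ∈ J} :=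
  fun p q r hpq hqr hp hr =>
    hJ _ _ _ (Subtype.coe_le_coe.mpr hpq) (Subtype.coe_le_coe.mpr hqr) hp hr

end PMod

/-
A module whose fibres are finite-dimensional is the direct sum of the joint eigenspaces of a maximal
commuting family of idempotent endomorphisms, and these summands are indecomposable. A summand is
therefore an interval module as soon as an interval module splits off from it. For this it is enough
to find a section of the module on a directed interval `J` which nowhere on `J` is a sum of elements
born outside `J`: a linear form on the colimit over `J`, modulo what is born outside, gives the
retraction.

Over an upward closed part of a product of two linear orders, middle exactness yields such a section
on a block, in one of three ways. If some element dies both far to the right and far above, take one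
that dies as early as possible; it extends to a section on the quadrant below its death, because
middle exactness lets a partial section on a finite grid be extended downwards and a compactness
argument handles infinitely many points. Otherwise, if some element dies far to the right, the
elements with this property form a submodule whose vertical maps are isomorphisms, so a section on a
vertical strip comes from the classification over a linear order; the other axis is symmetric.
Otherwise all structure maps are injective, the fibres are subspaces of the colimit, and an element
that is born as early as possible gives a section on a quadrant.
-/

namespace PMod

section LinearAlgebra

variable {k : Type*} [Field k]

section Chains

variable {V : Type*} [AddCommGroup V] [Module k V] {α β : Type*} [LinearOrder α] [LinearOrder β]

theorem exists_least_ne_bot {f : α → Submodule k V} (hf : Monotone f)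
    [∀ x, FiniteDimensional k (f x)] {x₁ : α} (hx₁ : f x₁ ≠ ⊥) :
    ∃ x₀, f x₀ ≠ ⊥ ∧ ∀ x, f x ≠ ⊥ → f x₀ ≤ f x := by
  obtain ⟨x₀, hx₀, hmin⟩ := exists_minimalFor_of_wellFoundedLT (fun x => f x ≠ ⊥)
    (fun x => Module.finrank k (f x)) ⟨x₁, hx₁⟩
  refine ⟨x₀, hx₀, fun x hx => (le_total x₀ x).elim (fun h => hf h) fun h => ?_⟩
  exact (Submodule.eq_of_le_of_finrank_le (hf h) (hmin hx (Submodule.finrank_mono (hf h)))).ge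

theorem exists_mem_all_ne_bot {f : α → Submodule k V} {g : β → Submodule k V} (hf : Monotone f)
    (hg : Monotone g) [∀ x, FiniteDimensional k (f x)] {x₁ : α} (hx₁ : f x₁ ≠ ⊥) {y₁ : β}
    (hy₁ : ∀ x, f x ≤ g y₁) :
    ∃ x₀, ∃ m ∈ f x₀, m ≠ 0 ∧ (∀ x, f x ≠ ⊥ → m ∈ f x) ∧ ∀ y, f x₀ ⊓ g y ≠ ⊥ → m ∈ g y := by
  obtain ⟨x₀, hx₀, hmin⟩ := exists_least_ne_bot hf hx₁
  have (y : β) : FiniteDimensional k ↥(f x₀ ⊓ g y) :=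
    Submodule.finiteDimensional_of_le inf_le_left
  obtain ⟨y₀, hy₀, hmin'⟩ := exists_least_ne_bot (f := fun y => f x₀ ⊓ g y)
    (fun _ _ h => inf_le_inf_left _ (hg h)) (x₁ := y₁) (by rwa [inf_eq_left.mpr (hy₁ x₀)])
  obtain ⟨m, hm, hm0⟩ := Submodule.exists_mem_ne_zero_of_ne_bot hy₀
  exact ⟨x₀, m, hm.1, hm0, fun x hx => hmin x hx hm.1, fun y hy => (hmin' y hy hm).2⟩

end Chains

section Compactness

variable {P : Type*} {V : P → Type*} [∀ p, AddCommGroup (V p)] [∀ p, Module k (V p)]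

theorem exists_dual_eq_on_graph {U : Type*} [AddCommGroup U] [Module k U]
    (R : Submodule k (U × k)) (hR : ∀ x ∈ R, x.1 = 0 → x.2 = 0) :
    ∃ g : Module.Dual k U, ∀ x ∈ R, g x.1 = x.2 := by
  obtain ⟨g, hg⟩ := LinearMap.exists_extend R.toLinearPMap.toFun
  refine ⟨g, fun x hx => ?_⟩
  let u : R.toLinearPMap.domain := ⟨x.1, Submodule.mem_map_of_mem hx⟩
  have hsub : (0, x.2 - R.toLinearPMap u) ∈ R := by
    simpa only [u, Prod.mk_sub_mk, sub_self] using
      R.sub_mem (x := (x.1, x.2)) hx (Submodule.mem_graph_toLinearPMap hR u)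
  exact (LinearMap.congr_fun hg u).trans (sub_eq_zero.mp (hR _ hsub rfl)).symm

theorem exists_eval_eq_of_dual_dual [∀ p, FiniteDimensional k (V p)]
    (g : Module.Dual k (Module.Dual k (∀ p, V p))) :
    ∃ s : ∀ p, V p, ∀ φ : Module.Dual k (∀ p, V p), ∀ G : Finset P,
      DependsOn φ (G : Set P) → φ s = g φ := by
  classical
  refine ⟨fun p => (Module.evalEquiv k (V p)).symm (g.comp (LinearMap.proj p).dualMap),
    fun φ G hφ => ?_⟩
  have hsum : φ = ∑ p ∈ G, (φ.comp (LinearMap.single k V p)).comp (LinearMap.proj p) := by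
    ext t
    have ht : φ t = φ (∑ p ∈ G, Pi.single p (t p)) := hφ fun p hp => by
      simp [Finset.sum_apply, Finset.sum_pi_single, Finset.mem_coe.mp hp]
    simpa using ht
  conv_lhs => rw [hsum]
  conv_rhs => rw [hsum]
  simp only [LinearMap.sum_apply, map_sum, LinearMap.comp_apply, LinearMap.proj_apply]
  refine Finset.sum_congr rfl fun p _ => ?_
  exact Module.apply_evalEquiv_symm_apply k (V p) (φ.comp (LinearMap.single k V p))
    (g.comp (LinearMap.proj p).dualMap)

/-- The scalar linear equations `φ t = c` in finitely many coordinates which hold for all `t` in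
some member of a decreasing family of sets `A F`: a point satisfying them all is a limit of the
family in the sense of linear compactness. -/
def finiteEquations (A : Finset P → Set (∀ p, V p)) (hA : Antitone A) :
    Submodule k (Module.Dual k (∀ p, V p) × k) where
  carrier := {e | ∃ G F : Finset P, DependsOn e.1 (G : Set P) ∧ ∀ t ∈ A F, e.1 t = e.2}
  zero_mem' := ⟨∅, ∅, fun _ _ _ => rfl, fun _ _ => rfl⟩
  add_mem' := by
    classical
    rintro e e' ⟨G, F, hG, hF⟩ ⟨G', F', hG', hF'⟩
    refine ⟨G ∪ G', F ∪ F', fun t t' h => ?_, fun t ht => ?_⟩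
    · exact congrArg₂ (· + ·) (hG fun p hp => h p (by simp [Finset.mem_coe.mp hp]))
        (hG' fun p hp => h p (by simp [Finset.mem_coe.mp hp]))
    · exact congrArg₂ (· + ·) (hF t (hA Finset.subset_union_left ht))
        (hF' t (hA Finset.subset_union_right ht))
  smul_mem' := by
    rintro c e ⟨G, F, hG, hF⟩
    exact ⟨G, F, fun t t' h => congrArg (c • ·) (hG h), fun t ht => congrArg (c • ·) (hF t ht)⟩

-- The equations determine a linear form on their left-hand sides; since the `V p` are reflexive, on
-- functionals of finitely many coordinates such a form is the evaluation at a point.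
theorem exists_forall_linear_eq [∀ p, FiniteDimensional k (V p)]
    {A : Finset P → Set (∀ p, V p)} (hA : Antitone A) (hne : ∀ F, (A F).Nonempty) :
    ∃ s : ∀ p, V p, ∀ {W : Type*} [AddCommGroup W] [Module k W] (L : (∀ p, V p) →ₗ[k] W) (w : W)
      (F G : Finset P), DependsOn L (G : Set P) → (∀ t ∈ A F, L t = w) → L s = w := by
  obtain ⟨g, hg⟩ := exists_dual_eq_on_graph (finiteEquations (k := k) A hA) (by
    rintro ⟨φ, c⟩ ⟨-, F, -, hF⟩ rfl
    obtain ⟨t, ht⟩ := hne F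
    exact (hF t ht).symm)
  obtain ⟨s, hs⟩ := exists_eval_eq_of_dual_dual g
  refine ⟨s, fun {W} _ _ L w F G hL hF => ?_⟩
  rw [← sub_eq_zero, ← Module.forall_dual_apply_eq_zero_iff k]
  intro ψ
  have hψ : DependsOn (ψ.comp L) (G : Set P) := fun t t' h => congrArg ψ (hL h)
  have hmem : (ψ.comp L, ψ w) ∈ finiteEquations A hA :=
    ⟨G, F, hψ, fun t ht => congrArg ψ (hF t ht)⟩
  rw [map_sub, sub_eq_zero]
  exact (hs _ G hψ).trans (hg _ hmem)

end Compactness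

section Idempotents

theorem exists_maximal_commuting {R : Type*} [Mul R] (A : Set R) :
    ∃ E ⊆ A, (∀ e ∈ E, ∀ e' ∈ E, Commute e e') ∧
      ∀ a ∈ A, (∀ e ∈ E, Commute e a) → a ∈ E := by
  obtain ⟨E, hE⟩ : ∃ E, Maximal (· ∈ {E : Set R | E ⊆ A ∧ ∀ e ∈ E, ∀ e' ∈ E, Commute e e'}) E := by
    refine zorn_subset _ fun c hc hchain => ⟨⋃₀ c, ⟨Set.sUnion_subset fun E hE => (hc hE).1, ?_⟩,
      fun E hE => Set.subset_sUnion_of_mem hE⟩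
    rintro e ⟨E, hE, he⟩ e' ⟨E', hE', he'⟩
    rcases hchain.total hE hE' with h | h
    · exact (hc hE').2 e (h he) e' he'
    · exact (hc hE).2 e he e' (h he')
  refine ⟨E, hE.prop.1, hE.prop.2, fun a ha hcomm => ?_⟩
  refine hE.le_of_ge (y := insert a E) ⟨Set.insert_subset ha hE.prop.1, ?_⟩
    (Set.subset_insert a E) (Set.mem_insert a E)
  rintro e (rfl | he) e' (rfl | he')
  exacts [Commute.refl _, (hcomm e' he').symm, hcomm e he, hE.prop.2 e he e' he']

variable {V : Type*} [AddCommGroup V] [Module k V]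

theorem maxGenEigenspace_eq_eigenspace_of_isIdempotentElem {e : Module.End k V}
    (he : IsIdempotentElem e) (μ : k) :
    e.maxGenEigenspace μ = e.eigenspace μ := by
  have hsep : (Polynomial.X ^ 2 - Polynomial.X : Polynomial k).Separable :=
    ⟨-4, 2 * Polynomial.X - 1, by simp; ring⟩
  have hss : e.IsSemisimple := Module.End.isSemisimple_of_squarefree_aeval_eq_zero
    hsep.squarefree (by simp [pow_two, he.eq])
  exact hss.isFinitelySemisimple.maxGenEigenspace_eq_eigenspace μ

theorem iSup_maxGenEigenspace_eq_top_of_isIdempotentElem {e : Module.End k V}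
    (he : IsIdempotentElem e) :
    ⨆ μ, e.maxGenEigenspace μ = ⊤ := by
  refine eq_top_iff.mpr fun v _ => ?_
  have hee : e (e v) = e v := LinearMap.congr_fun he v
  rw [← add_sub_cancel (e v) v]
  refine add_mem (Submodule.mem_iSup_of_mem 1 ?_) (Submodule.mem_iSup_of_mem 0 ?_) <;>
    simp [maxGenEigenspace_eq_eigenspace_of_isIdempotentElem he, hee]

variable {ι : Type*} {e : ι → Module.End k V}

theorem iSupIndep_iInf_eigenspace (he : ∀ i, IsIdempotentElem (e i))
    (hc : ∀ i j, Commute (e i) (e j)) :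
    iSupIndep fun χ : ι → k => ⨅ i, (e i).eigenspace (χ i) := by
  simpa only [maxGenEigenspace_eq_eigenspace_of_isIdempotentElem (he _)] using
    Module.End.independent_iInf_maxGenEigenspace_of_forall_mapsTo e
      fun i j φ => Module.End.mapsTo_maxGenEigenspace_of_comm (hc j i) φ

theorem iSup_iInf_eigenspace_eq_top [FiniteDimensional k V] (he : ∀ i, IsIdempotentElem (e i))
    (hc : ∀ i j, Commute (e i) (e j)) :
    ⨆ χ : ι → k, ⨅ i, (e i).eigenspace (χ i) = ⊤ := by
  simpa only [maxGenEigenspace_eq_eigenspace_of_isIdempotentElem (he _)] using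
    Module.End.iSup_iInf_maxGenEigenspace_eq_top_of_iSup_maxGenEigenspace_eq_top_of_commute
      e (fun i j _ => hc i j) fun i => iSup_maxGenEigenspace_eq_top_of_isIdempotentElem (he i)

end Idempotents

end LinearAlgebra

variable {k : Type} [Field k]

section Morphisms

variable {P : Type} [Preorder P]

theorem PersistenceModule.map_map (M : PersistenceModule k P) {p q r : P} (hpq : p ≤ q)
    (hqr : q ≤ r) (v : M.V p) : M.map hqr (M.map hpq v) = M.map (hpq.trans hqr) v :=
  (LinearMap.congr_fun (M.map_trans hpq hqr) v).symm

theorem PersistenceModule.map_self (M : PersistenceModule k P) {p : P} (h : p ≤ p) (v : M.V p) :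
    M.map h v = v :=
  LinearMap.congr_fun (M.map_refl p) v

theorem Hom.map_app {M N : PersistenceModule k P} (f : Hom M N) {p q : P} (h : p ≤ q)
    (v : M.V p) : N.map h (f.app p v) = f.app q (M.map h v) :=
  LinearMap.congr_fun (f.natural h) v

/-- The composite of two morphisms of persistence modules. -/
def Hom.comp {L M N : PersistenceModule k P} (g : Hom M N) (f : Hom L M) : Hom L N where
  app p := (g.app p).comp (f.app p)
  natural h := LinearMap.ext fun v => (g.map_app h _).trans (congrArg _ (f.map_app h v))

theorem IsIsoHom.exists_inverse {M N : PersistenceModule k P} {f : Hom M N} (hf : IsIsoHom f) :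
    ∃ g : Hom N M, (∀ p v, g.app p (f.app p v) = v) ∧ ∀ p v, f.app p (g.app p v) = v := by
  let e (p : P) : M.V p ≃ₗ[k] N.V p := LinearEquiv.ofBijective (f.app p) (hf p)
  refine ⟨⟨fun p => (e p).symm, fun {p q} h => LinearMap.ext fun v => ?_⟩,
    fun p => (e p).symm_apply_apply, fun p => (e p).apply_symm_apply⟩
  refine ((e q).symm_apply_eq.mpr ?_).symm
  exact (congrArg _ ((e p).apply_symm_apply v)).symm.trans (f.map_app h _)

theorem Isomorphic.symm {M N : PersistenceModule k P} : Isomorphic M N → Isomorphic N M := by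
  rintro ⟨f, hf⟩
  obtain ⟨g, hgf, hfg⟩ := hf.exists_inverse
  exact ⟨g, fun p => Function.bijective_iff_has_inverse.mpr ⟨f.app p, hfg p, hgf p⟩⟩

theorem Isomorphic.trans {M N K : PersistenceModule k P} :
    Isomorphic M N → Isomorphic N K → Isomorphic M K := by
  rintro ⟨f, hf⟩ ⟨g, hg⟩
  exact ⟨g.comp f, fun p => (hg p).comp (hf p)⟩

section Sums

variable {M N K : PersistenceModule k P} {ι : Type} {A : ι → PersistenceModule k P}

/-- The morphism to a binary direct sum with the given components. -/
def Hom.prod (f : Hom K M) (g : Hom K N) : Hom K (sum2 M N) where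
  app p := (f.app p).prod (g.app p)
  natural h := LinearMap.ext fun v => Prod.ext (f.map_app h v) (g.map_app h v)

variable (M N) in
/-- The idempotent endomorphism of a binary direct sum with image the first summand. -/
def fstIdempotent : Hom (sum2 M N) (sum2 M N) where
  app p := (LinearMap.inl k (M.V p) (N.V p)).comp (LinearMap.fst k (M.V p) (N.V p))
  natural h := LinearMap.ext fun _ => Prod.ext rfl (map_zero (N.map h))

variable (A) in
/-- The projection of a direct sum onto one of its summands. -/
def directSumProj (i : ι) : Hom (directSum A) (A i) where
  app p := DFinsupp.lapply (M := fun i => (A i).V p) i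
  natural _ := LinearMap.ext fun _ => rfl

variable (A) in
/-- The inclusion of a summand into a direct sum. -/
noncomputable def directSumIncl [DecidableEq ι] (i : ι) : Hom (A i) (directSum A) where
  app p := DFinsupp.lsingle (M := fun i => (A i).V p) i
  natural h := LinearMap.ext fun _ =>
    DFinsupp.mapRange_single (f := fun j => (A j).map h) (hf := fun _ => map_zero _)

theorem directSumProj_incl_self [DecidableEq ι] (i : ι) (p : P) (v : (A i).V p) :
    (directSumProj A i).app p ((directSumIncl A i).app p v) = v :=
  DFinsupp.single_eq_same (β := fun i => (A i).V p)

theorem directSumProj_incl_of_ne [DecidableEq ι] {i j : ι} (hij : i ≠ j) (p : P)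
    (v : (A j).V p) : (directSumProj A i).app p ((directSumIncl A j).app p v) = 0 :=
  DFinsupp.single_eq_of_ne (β := fun i => (A i).V p) hij

theorem directSum_linearMap_ext [DecidableEq ι] {p : P} {W : Type} [AddCommGroup W] [Module k W]
    {f g : (directSum A).V p →ₗ[k] W}
    (h : ∀ i v, f ((directSumIncl A i).app p v) = g ((directSumIncl A i).app p v)) : f = g :=
  DFinsupp.lhom_ext (M := fun i => (A i).V p) h

/-- The morphism from a direct sum with the given components. -/
noncomputable def directSumDesc [DecidableEq ι] (f : ∀ i, Hom (A i) M) : Hom (directSum A) M where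
  app p := DFinsupp.lsum (M := fun i => (A i).V p) ℕ fun i => (f i).app p
  natural {p q} h := directSum_linearMap_ext fun i v => by
    let F (p : P) : (directSum A).V p →ₗ[k] M.V p :=
      DFinsupp.lsum (M := fun i => (A i).V p) ℕ fun i => (f i).app p
    have hF (p : P) (v : (A i).V p) : F p ((directSumIncl A i).app p v) = (f i).app p v :=
      DFinsupp.lsum_single ..
    calc M.map h (F p ((directSumIncl A i).app p v))
        = (f i).app q ((A i).map h v) := by rw [hF, (f i).map_app]
      _ = F q ((directSum A).map h ((directSumIncl A i).app p v)) := by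
          rw [(directSumIncl A i).map_app, hF]

theorem directSumDesc_incl [DecidableEq ι] (f : ∀ i, Hom (A i) M) (i : ι) (p : P)
    (v : (A i).V p) : (directSumDesc f).app p ((directSumIncl A i).app p v) = (f i).app p v :=
  DFinsupp.lsum_single ..

theorem isomorphic_directSum_congr {B : ι → PersistenceModule k P}
    (h : ∀ i, Isomorphic (A i) (B i)) : Isomorphic (directSum A) (directSum B) := by
  choose f hf using h
  let e (p : P) := DFinsupp.mapRange.linearEquiv fun i =>
    LinearEquiv.ofBijective ((f i).app p) (hf i p)
  exact ⟨⟨fun p => (e p).toLinearMap, fun h => LinearMap.ext fun v =>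
    DFinsupp.ext fun i => (f i).map_app h _⟩, fun p => (e p).bijective⟩

end Sums

/-- The persistence module formed by a family of subspaces stable under the structure maps. -/
abbrev ofSubmodule (M : PersistenceModule k P) (N : ∀ p, Submodule k (M.V p))
    (hN : ∀ {p q : P} (h : p ≤ q), ∀ v ∈ N p, M.map h v ∈ N q) : PersistenceModule k P where
  V p := N p
  map h := (M.map h).restrict (hN h)
  map_refl p := LinearMap.ext fun v => Subtype.ext (M.map_self le_rfl (v : M.V p))
  map_trans hpq hqr := LinearMap.ext fun v => Subtype.ext (M.map_map hpq hqr v).symm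

/-- The inclusion of a submodule. -/
def ofSubmoduleSubtype (M : PersistenceModule k P) (N : ∀ p, Submodule k (M.V p))
    (hN : ∀ {p q : P} (h : p ≤ q), ∀ v ∈ N p, M.map h v ∈ N q) : Hom (ofSubmodule M N hN) M where
  app p := (N p).subtype
  natural _ := rfl

end Morphisms

section Summands

variable {P : Type} [Preorder P]

/-- `N` is a direct summand of `M`, exhibited as a retract. -/
def IsSummand (N M : PersistenceModule k P) : Prop :=
  ∃ (i : Hom N M) (r : Hom M N), ∀ p v, r.app p (i.app p v) = v

theorem Isomorphic.isSummand_of_directSum {ι : Type} {M : PersistenceModule k P}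
    {N : ι → PersistenceModule k P} (h : Isomorphic M (directSum N)) (i : ι) :
    IsSummand (N i) M := by
  classical
  obtain ⟨f, hf⟩ := h
  obtain ⟨g, -, hfg⟩ := hf.exists_inverse
  refine ⟨g.comp (directSumIncl N i), (directSumProj N i).comp f, fun p v => ?_⟩
  exact (congrArg _ (hfg p _)).trans (directSumProj_incl_self i p v)

theorem IsSummand.finiteDimensional {N M : PersistenceModule k P} (h : IsSummand N M) (p : P)
    [FiniteDimensional k (M.V p)] : FiniteDimensional k (N.V p) := by
  obtain ⟨i, r, hri⟩ := h
  exact FiniteDimensional.of_injective (i.app p) (Function.LeftInverse.injective (hri p))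

theorem IsSummand.isomorphic {N M : PersistenceModule k P} (h : IsSummand N M)
    (hM : Indecomposable M) (hN : ¬ IsZero N) : Isomorphic M N := by
  obtain ⟨i, r, hri⟩ := h
  let K := ofSubmodule M (fun p => LinearMap.ker (r.app p)) fun h v hv => by
    rw [LinearMap.mem_ker, ← r.map_app, LinearMap.mem_ker.mp hv, map_zero]
  let γ (p : P) : M.V p →ₗ[k] K.V p :=
    (LinearMap.id - (i.app p).comp (r.app p)).codRestrict (LinearMap.ker (r.app p))
      fun v => by simp [hri]
  let c : Hom M K := ⟨γ, fun h => LinearMap.ext fun v => Subtype.ext <|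
    (map_sub (M.map h) v _).trans <| congrArg (M.map h v - ·) <|
      (i.map_app h _).trans (congrArg _ (r.map_app h v))⟩
  have hf : IsIsoHom (r.prod c) := fun p => by
    refine ⟨(injective_iff_map_eq_zero _).mpr fun v hv => ?_, fun ⟨n, u, hu⟩ =>
      ⟨i.app p n + u, Prod.ext ?_ (Subtype.ext ?_)⟩⟩
    · have hr : r.app p v = 0 := congrArg Prod.fst hv
      have hc : v - i.app p (r.app p v) = 0 := congrArg (fun w => (w.2 : M.V p)) hv
      simpa [hr] using hc
    · change r.app p (i.app p n + u) = n
      rw [map_add, hri, LinearMap.mem_ker.mp hu, add_zero]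
    · change i.app p n + u - i.app p (r.app p (i.app p n + u)) = u
      rw [map_add, hri, LinearMap.mem_ker.mp hu, add_zero, add_sub_cancel_left]
  have hK : IsZero K := (hM.2 N K ⟨r.prod c, hf⟩).resolve_left hN
  refine ⟨r, fun p => ⟨(injective_iff_map_eq_zero _).mpr fun v hv => ?_,
    fun n => ⟨i.app p n, hri p n⟩⟩⟩
  exact congrArg Subtype.val (hK p ⟨v, hv⟩)

end Summands

section Decomposition

variable {P : Type} [Preorder P] {M : PersistenceModule k P}

theorem isIsoHom_directSumDesc_subtype {ι : Type} [DecidableEq ι]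
    {N : ι → ∀ p, Submodule k (M.V p)}
    (hN : ∀ i {p q : P} (h : p ≤ q), ∀ v ∈ N i p, M.map h v ∈ N i q)
    (hind : ∀ p, iSupIndep fun i => N i p) (htop : ∀ p, ⨆ i, N i p = ⊤) :
    IsIsoHom (directSumDesc fun i => ofSubmoduleSubtype M (N i) (hN i)) := fun p => by
  refine ⟨(hind p).dfinsupp_lsum_injective, LinearMap.range_eq_top.mp ?_⟩
  exact (Submodule.iSup_eq_range_dfinsupp_lsum _).symm.trans (htop p)

theorem exists_projection {ι : Type} {N : ι → ∀ p, Submodule k (M.V p)}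
    (hN : ∀ i {p q : P} (h : p ≤ q), ∀ v ∈ N i p, M.map h v ∈ N i q)
    (hind : ∀ p, iSupIndep fun i => N i p) (htop : ∀ p, ⨆ i, N i p = ⊤) (i : ι) :
    ∃ π : Hom M (ofSubmodule M (N i) (hN i)),
      (∀ p (v : N i p), π.app p v = v) ∧ ∀ j ≠ i, ∀ p, ∀ v ∈ N j p, π.app p v = 0 := by
  classical
  let A (i : ι) := ofSubmodule M (N i) (hN i)
  obtain ⟨g, hg, -⟩ := (isIsoHom_directSumDesc_subtype hN hind htop).exists_inverse
  have hincl (j : ι) (p : P) (v : N j p) : g.app p v = (directSumIncl A j).app p v := by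
    rw [← hg p ((directSumIncl A j).app p v), directSumDesc_incl]
    rfl
  refine ⟨(directSumProj A i).comp g, fun p v => ?_, fun j hj p v hv => ?_⟩
  · exact (congrArg ((directSumProj A i).app p) (hincl i p v)).trans
      (directSumProj_incl_self (A := A) i p v)
  · exact (congrArg ((directSumProj A i).app p) (hincl j p ⟨v, hv⟩)).trans
      (directSumProj_incl_of_ne hj.symm p _)

variable (M) in
/-- The idempotent endomorphisms of `M`, as elements of the ring of families of endomorphisms of
its fibres. -/
def naturalIdempotents : Set (∀ p, Module.End k (M.V p)) :=
  {e | IsIdempotentElem e ∧ ∀ {p q : P} (h : p ≤ q) v, M.map h (e p v) = e q (M.map h v)}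

theorem indecomposable_of_idempotents_eq_smul (hM : ¬ IsZero M)
    (h : ∀ a ∈ naturalIdempotents M, ∃ c : k, ∀ p v, a p v = c • v) : Indecomposable M := by
  refine ⟨hM, fun M' M'' ⟨f, hf⟩ => ?_⟩
  obtain ⟨g, -, hfg⟩ := hf.exists_inverse
  let a : Hom M M := g.comp ((fstIdempotent M' M'').comp f)
  have hfa (p : P) (v : M.V p) : f.app p (a.app p v) = ((f.app p v).1, 0) := hfg p _
  have ha : (a.app ·) ∈ naturalIdempotents M := ⟨funext fun p => LinearMap.ext fun v =>
    (hf p).injective (by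
      rw [Pi.mul_apply, Module.End.mul_apply, hfa, hfa]), a.map_app⟩
  obtain ⟨c, hc⟩ := h _ ha
  have hscalar (p : P) (w : (sum2 M' M'').V p) : (w.1, 0) = c • w := by
    have h := congrArg (f.app p) (hc p (g.app p w))
    rwa [hfa, map_smul, hfg] at h
  refine or_iff_not_imp_left.mpr fun hM' q u => ?_
  obtain ⟨p, u', hu'⟩ : ∃ p, ∃ u' : M'.V p, u' ≠ 0 := by simpa [IsZero] using hM'
  have hc1 : c = 1 := by
    have : u' = c • u' := congrArg Prod.fst (hscalar p (u', 0))
    exact smul_left_injective k hu' (by simpa using this.symm)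
  have hu : 0 = c • u := congrArg Prod.snd (hscalar q (0, u))
  simpa [hc1] using hu.symm

/-- The joint eigenspace in `M.V p` of a set `E` of families of endomorphisms, for the eigenvalues
prescribed by `χ`. -/
def jointEigenspace (E : Set (∀ p, Module.End k (M.V p))) (χ : E → k) (p : P) :
    Submodule k (M.V p) :=
  ⨅ e : E, ((e : ∀ p, Module.End k (M.V p)) p).eigenspace (χ e)

variable {E : Set (∀ p, Module.End k (M.V p))}

theorem mem_jointEigenspace {χ : E → k} {p : P} {v : M.V p} :
    v ∈ jointEigenspace E χ p ↔ ∀ e : E, e.1 p v = χ e • v := by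
  simp [jointEigenspace, Submodule.mem_iInf]

theorem map_mem_jointEigenspace (hE : E ⊆ naturalIdempotents M) (χ : E → k) {p q : P}
    (h : p ≤ q) : ∀ v ∈ jointEigenspace E χ p, M.map h v ∈ jointEigenspace E χ q := by
  simp only [mem_jointEigenspace]
  intro v hv e
  rw [← (hE e.2).2 h, hv e, map_smul]

theorem iSupIndep_jointEigenspace (hE : E ⊆ naturalIdempotents M)
    (hcomm : ∀ e ∈ E, ∀ e' ∈ E, Commute e e') (p : P) :
    iSupIndep fun χ : E → k => jointEigenspace E χ p :=
  iSupIndep_iInf_eigenspace (fun e => congrFun (hE e.2).1 p)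
    fun e e' => congrFun (hcomm e e.2 e' e'.2) p

theorem iSup_jointEigenspace_eq_top [∀ p, FiniteDimensional k (M.V p)]
    (hE : E ⊆ naturalIdempotents M) (hcomm : ∀ e ∈ E, ∀ e' ∈ E, Commute e e') (p : P) :
    ⨆ χ : E → k, jointEigenspace E χ p = ⊤ :=
  iSup_iInf_eigenspace_eq_top (fun e => congrFun (hE e.2).1 p)
    fun e e' => congrFun (hcomm e e.2 e' e'.2) p

theorem indecomposable_jointEigenspace [∀ p, FiniteDimensional k (M.V p)]
    (hE : E ⊆ naturalIdempotents M) (hcomm : ∀ e ∈ E, ∀ e' ∈ E, Commute e e')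
    (hmax : ∀ a ∈ naturalIdempotents M, (∀ e ∈ E, Commute e a) → a ∈ E) {χ : E → k}
    (hχ : ∃ p, jointEigenspace E χ p ≠ ⊥) :
    Indecomposable (ofSubmodule M (jointEigenspace E χ) (map_mem_jointEigenspace hE χ)) := by
  have htop := iSup_jointEigenspace_eq_top hE hcomm
  obtain ⟨π, hπ, hπ'⟩ := exists_projection (fun χ => map_mem_jointEigenspace hE χ)
    (iSupIndep_jointEigenspace hE hcomm) htop χ
  have hπe (e : E) (p : P) (v : M.V p) : π.app p (e.1 p v) = χ e • π.app p v := by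
    refine Submodule.iSup_induction _ (motive := fun v => π.app p (e.1 p v) = χ e • π.app p v)
      ((htop p).ge (Submodule.mem_top (x := v))) (fun χ' v hv => ?_) (by simp)
      fun v w hv hw => by simp [hv, hw]
    rw [mem_jointEigenspace.mp hv e, map_smul]
    rcases eq_or_ne χ' χ with rfl | hne
    · rfl
    · rw [hπ' χ' hne p v hv, smul_zero, smul_zero]
  refine indecomposable_of_idempotents_eq_smul ?_ fun a ha => ?_
  · obtain ⟨p, hp⟩ := hχ
    obtain ⟨v, hv, hv0⟩ := Submodule.exists_mem_ne_zero_of_ne_bot hp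
    exact fun hz => hv0 (congrArg Subtype.val (hz p ⟨v, hv⟩))
  · let b (p : P) : Module.End k (M.V p) :=
      (jointEigenspace E χ p).subtype.comp ((a p).comp (π.app p))
    have hb : b ∈ naturalIdempotents M := ⟨funext fun p => LinearMap.ext fun v => by
        simpa [b, hπ] using LinearMap.congr_fun (congrFun ha.1 p) (π.app p v), fun {p q} h v => by
        have := ha.2 h (π.app p v)
        rw [π.map_app] at this
        exact congrArg Subtype.val this⟩
    have hbE : b ∈ E := hmax b hb fun e he => funext fun p => LinearMap.ext fun v => by
      have h := mem_jointEigenspace.mp (a p (π.app p v)).2 ⟨e, he⟩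
      simpa [b, hπe ⟨e, he⟩ p v] using h
    refine ⟨χ ⟨b, hbE⟩, fun p v => Subtype.ext ?_⟩
    simpa [b, hπ] using mem_jointEigenspace.mp v.2 ⟨b, hbE⟩

variable (M) in
theorem exists_isomorphic_directSum_indecomposable [∀ p, FiniteDimensional k (M.V p)] :
    ∃ (ι : Type) (N : ι → PersistenceModule k P),
      Isomorphic M (directSum N) ∧ ∀ i, Indecomposable (N i) := by
  classical
  obtain ⟨E, hE, hcomm, hmax⟩ := exists_maximal_commuting (naturalIdempotents M)
  let ι := {χ : E → k // ∃ p, jointEigenspace E χ p ≠ ⊥}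
  have hN (χ : ι) {p q : P} (h : p ≤ q) := map_mem_jointEigenspace hE χ.1 h
  have hind (p : P) : iSupIndep fun χ : ι => jointEigenspace E χ.1 p :=
    (iSupIndep_jointEigenspace hE hcomm p).comp Subtype.val_injective
  have htop (p : P) : ⨆ χ : ι, jointEigenspace E χ.1 p = ⊤ := by
    refine eq_top_iff.mpr ((iSup_jointEigenspace_eq_top hE hcomm p).ge.trans (iSup_le fun χ => ?_))
    by_cases hχ : jointEigenspace E χ p = ⊥
    · simp [hχ]
    · exact le_iSup (fun χ : ι => jointEigenspace E χ.1 p) ⟨χ, p, hχ⟩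
  exact ⟨ι, fun χ => ofSubmodule M (jointEigenspace E χ.1) (hN χ),
    Isomorphic.symm ⟨_, isIsoHom_directSumDesc_subtype hN hind htop⟩,
    fun χ => indecomposable_jointEigenspace hE hcomm hmax χ.2⟩

end Decomposition

section Colimits

variable {P : Type} [Preorder P]

open Classical in
/-- The colimit of a persistence module. -/
abbrev PersistenceModule.Colimit (M : PersistenceModule k P) : Type :=
  Module.DirectLimit M.V fun _ _ h => M.map h

open Classical in
/-- The canonical map from a fibre of a persistence module to the colimit. -/
noncomputable def toColimit (M : PersistenceModule k P) (p : P) : M.V p →ₗ[k] M.Colimit :=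
  Module.DirectLimit.of k P M.V (fun _ _ h => M.map h) p

variable (M : PersistenceModule k P)

theorem toColimit_map {p q : P} (h : p ≤ q) (v : M.V p) :
    toColimit M q (M.map h v) = toColimit M p v := by
  classical exact Module.DirectLimit.of_f

theorem exists_map_eq_zero_of_toColimit_eq_zero [IsDirectedOrder P] {p : P} {v : M.V p}
    (hv : toColimit M p v = 0) : ∃ q, ∃ h : p ≤ q, M.map h v = 0 := by
  have : DirectedSystem M.V (fun _ _ h => M.map h) :=
    ⟨fun _ v => M.map_self le_rfl v, fun _ _ _ hpq hqr v => M.map_map hpq hqr v⟩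
  classical exact Module.DirectLimit.of.zero_exact hv

end Colimits

section Sections

variable {P : Type} [Preorder P]

/-- The vectors of `M.V p` killed by all structure maps to points of `A`. -/
def kerOn (M : PersistenceModule k P) (A : Set P) (p : P) : Submodule k (M.V p) :=
  ⨅ (q : P) (h : p ≤ q) (_ : q ∈ A), LinearMap.ker (M.map h)

/-- The subspace of `M.V p` generated by the images of the fibres at points of `A`. -/
def imFrom (M : PersistenceModule k P) (A : Set P) (p : P) : Submodule k (M.V p) :=
  ⨆ (q : P) (h : q ≤ p) (_ : q ∈ A), LinearMap.range (M.map h)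

/-- On `F`, the family `s` is the image of the generators of the interval module of `J`. -/
def IsSectionOn (M : PersistenceModule k P) (J F : Set P) (s : ∀ p, M.V p) : Prop :=
  (∀ p ∈ F, p ∈ J → ∀ q ∈ F, ∀ h : p ≤ q, M.map h (s p) = s q) ∧ ∀ q ∈ F, q ∉ J → s q = 0

/-- `M` has a section on `J` which at no point of `J` comes from outside `J`. This is what remains
to be found in order to split off an interval module, see
`HasEssentialSection.isSummand_intervalModule`. -/
def HasEssentialSection (M : PersistenceModule k P) (J : Set P) : Prop :=
  ∃ s, IsSectionOn M J Set.univ s ∧ ∀ q ∈ J, s q ∉ imFrom M Jᶜ q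

variable {M : PersistenceModule k P} {A J : Set P}

theorem mem_kerOn {p : P} {v : M.V p} :
    v ∈ kerOn M A p ↔ ∀ q, ∀ h : p ≤ q, q ∈ A → M.map h v = 0 := by
  simp [kerOn, Submodule.mem_iInf]

theorem kerOn_anti {A B : Set P} (h : A ⊆ B) (p : P) : kerOn M B p ≤ kerOn M A p :=
  fun _ hv => mem_kerOn.mpr fun q hpq hq => mem_kerOn.mp hv q hpq (h hq)

theorem map_mem_kerOn {p q : P} (h : p ≤ q) {v : M.V p} (hv : v ∈ kerOn M A p) :
    M.map h v ∈ kerOn M A q :=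
  mem_kerOn.mpr fun r hqr hr => (M.map_map h hqr v).trans (mem_kerOn.mp hv r _ hr)

theorem map_mem_imFrom {p q : P} (h : p ≤ q) (hp : p ∈ A) (v : M.V p) :
    M.map h v ∈ imFrom M A q :=
  Submodule.mem_iSup_of_mem p (Submodule.mem_iSup_of_mem h
    (Submodule.mem_iSup_of_mem hp (LinearMap.mem_range_self _ v)))

theorem imFrom_mono {A B : Set P} (h : A ⊆ B) (p : P) : imFrom M A p ≤ imFrom M B p :=
  iSup_mono fun _ => iSup_mono fun _ => iSup_mono' fun hq => ⟨h hq, le_rfl⟩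

theorem map_imFrom_le {p q : P} (h : p ≤ q) :
    imFrom M A p ≤ (imFrom M A q).comap (M.map h) := by
  refine iSup_le fun r => iSup_le fun hr => iSup_le fun hrA => ?_
  rintro _ ⟨v, rfl⟩
  rw [Submodule.mem_comap, M.map_map]
  exact map_mem_imFrom _ hrA v

theorem exists_map_eq_of_mem_imFrom {q : P} (hdir : DirectedOn (· ≤ ·) {c ∈ A | c ≤ q})
    {v : M.V q} (hv : v ∈ imFrom M A q) (hv0 : v ≠ 0) :
    ∃ c ∈ A, ∃ (h : c ≤ q) (u : M.V c), M.map h u = v := by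
  let R (c : {c // c ∈ A ∧ c ≤ q}) : Submodule k (M.V q) := LinearMap.range (M.map c.2.2)
  have hRmono (c d : {c // c ∈ A ∧ c ≤ q}) (h : (c : P) ≤ d) : R c ≤ R d := by
    rintro _ ⟨u, rfl⟩
    exact ⟨M.map h u, M.map_map h d.2.2 u⟩
  have hR : Directed (· ≤ ·) R := fun c c' =>
    let ⟨d, hd, hcd, hcd'⟩ := hdir c c.2 c' c'.2
    ⟨⟨d, hd⟩, hRmono c ⟨d, hd⟩ hcd, hRmono c' ⟨d, hd⟩ hcd'⟩
  have hle : imFrom M A q ≤ ⨆ c, R c :=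
    iSup_le fun c => iSup_le fun h => iSup_le fun hc => le_iSup R ⟨c, hc, h⟩
  rcases isEmpty_or_nonempty {c // c ∈ A ∧ c ≤ q} with _ | _
  · rw [iSup_of_empty] at hle
    exact absurd ((Submodule.mem_bot k).mp (hle hv)) hv0
  · obtain ⟨⟨c, hc, h⟩, u, hu⟩ := (Submodule.mem_iSup_of_directed R hR).mp (hle hv)
    exact ⟨c, hc, h, u, hu⟩

theorem IsSectionOn.mono {F F' : Set P} {s : ∀ p, M.V p} (hs : IsSectionOn M J F' s)
    (h : F ⊆ F') : IsSectionOn M J F s :=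
  ⟨fun p hp hpJ q hq => hs.1 p (h hp) hpJ q (h hq), fun q hq => hs.2 q (h hq)⟩

theorem exists_isSectionOn_univ [∀ p, FiniteDimensional k (M.V p)] {p₀ : P} {m : M.V p₀}
    (h : ∀ F : Finset P, p₀ ∈ F → ∃ s, IsSectionOn M J F s ∧ s p₀ = m) :
    ∃ s, IsSectionOn M J Set.univ s ∧ s p₀ = m := by
  classical
  obtain ⟨s, hs⟩ := exists_forall_linear_eq (k := k)
    (A := fun F : Finset P => {s : ∀ p, M.V p | IsSectionOn M J F s ∧ s p₀ = m})
    (fun F F' hF s hs => ⟨hs.1.mono (Finset.coe_subset.mpr hF), hs.2⟩)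
    fun F => by
      obtain ⟨s, hs, hs₀⟩ := h (insert p₀ F) (Finset.mem_insert_self p₀ F)
      exact ⟨s, hs.mono (Finset.coe_subset.mpr (Finset.subset_insert p₀ F)), hs₀⟩
  refine ⟨s, ⟨fun p _ hp q _ hpq => ?_, fun q _ hq => ?_⟩, ?_⟩
  · refine sub_eq_zero.mp (hs ((M.map hpq).comp (LinearMap.proj p) - LinearMap.proj q) 0
      {p, q} {p, q} (fun t t' htt' => ?_) fun t ht => ?_)
    · simp [htt' p (by simp), htt' q (by simp)]
    · simpa using sub_eq_zero.mpr (ht.1.1 p (by simp) hp q (by simp) hpq)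
  · exact hs (LinearMap.proj q) 0 {q} {q} (fun t t' htt' => htt' q (by simp))
      fun t ht => ht.1.2 q (by simp) hq
  · exact hs (LinearMap.proj p₀) m ∅ {p₀} (fun t t' htt' => htt' p₀ (by simp)) fun t ht => ht.2

theorem HasEssentialSection.comap {P' : Type} [Preorder P'] {N : PersistenceModule k P'}
    {I : Set P'} (h : HasEssentialSection N I) {φ : P → P'} (hφ : Monotone φ)
    (e : ∀ p, M.V p ≃ₗ[k] N.V (φ p))
    (he : ∀ p q, ∀ h : p ≤ q, ∀ v, e q (M.map h v) = N.map (hφ h) (e p v)) :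
    HasEssentialSection M (φ ⁻¹' I) := by
  obtain ⟨s, hs, hess⟩ := h
  refine ⟨fun p => (e p).symm (s (φ p)), ⟨fun p _ hp q _ h => ?_, fun q _ hq => ?_⟩,
    fun q hq hmem => hess (φ q) hq ?_⟩
  · rw [LinearEquiv.eq_symm_apply, he, LinearEquiv.apply_symm_apply,
      hs.1 (φ p) trivial hp (φ q) trivial (hφ h)]
  · exact (LinearEquiv.map_eq_zero_iff _).mpr (hs.2 (φ q) trivial hq)
  · have hle : imFrom M (φ ⁻¹' I)ᶜ q ≤ (imFrom N Iᶜ (φ q)).comap (e q).toLinearMap := by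
      refine iSup_le fun c => iSup_le fun h => iSup_le fun hc => ?_
      rintro _ ⟨v, rfl⟩
      rw [Submodule.mem_comap, LinearEquiv.coe_coe, he]
      exact map_mem_imFrom (hφ h) hc (e c v)
    simpa using hle hmem

/-- The quotient of a persistence module by a family of subspaces stable under the structure
maps. -/
def quotientModule (M : PersistenceModule k P) (N : ∀ p, Submodule k (M.V p))
    (hN : ∀ {p q : P} (h : p ≤ q), N p ≤ (N q).comap (M.map h)) : PersistenceModule k P where
  V p := M.V p ⧸ N p
  map {p q} h := (N p).mapQ (N q) (M.map h) (hN h)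
  map_refl p := Submodule.linearMap_qext _ <| LinearMap.ext fun v =>
    congrArg (N p).mkQ (M.map_self le_rfl v)
  map_trans {_ _ r} hpq hqr := Submodule.linearMap_qext _ <| LinearMap.ext fun v =>
    congrArg (N r).mkQ (M.map_map hpq hqr v).symm

theorem HasEssentialSection.exists_dual (hne : J.Nonempty) (hdir : DirectedOn (· ≤ ·) J)
    (h : HasEssentialSection M J) :
    ∃ (s : ∀ p, M.V p) (f : ∀ p, Module.Dual k (M.V p)), IsSectionOn M J Set.univ s ∧
      (∀ p q, ∀ h : p ≤ q, q ∈ J → ∀ v, f q (M.map h v) = f p v) ∧ (∀ p ∉ J, f p = 0) ∧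
      ∀ p ∈ J, f p (s p) = 1 := by
  classical
  obtain ⟨s, hs, hess⟩ := h
  let N := restrict (quotientModule M (imFrom M Jᶜ) map_imFrom_le) J
  have : IsDirectedOrder J := ⟨hdir.directed_val⟩
  let j (q : J) : M.V q →ₗ[k] N.Colimit := (toColimit N q).comp (imFrom M Jᶜ (q : P)).mkQ
  have hj (p q : J) (h : p ≤ q) (v : M.V p) : j q (M.map h v) = j p v :=
    toColimit_map N h ((imFrom M Jᶜ (p : P)).mkQ v)
  obtain ⟨p₀, hp₀⟩ := hne
  have hne : j ⟨p₀, hp₀⟩ (s p₀) ≠ 0 := fun h0 => by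
    obtain ⟨q, h, hq⟩ := exists_map_eq_zero_of_toColimit_eq_zero N h0
    have hq' : M.map h (s p₀) ∈ imFrom M Jᶜ q := (Submodule.Quotient.mk_eq_zero _).mp hq
    rw [hs.1 p₀ trivial hp₀ q trivial h] at hq'
    exact hess q q.2 hq'
  have hconst (q : J) : j q (s q) = j ⟨p₀, hp₀⟩ (s p₀) := by
    obtain ⟨r, hqr, hr⟩ := exists_ge_ge q ⟨p₀, hp₀⟩
    rw [← hj q r hqr, ← hj ⟨p₀, hp₀⟩ r hr, hs.1 q trivial q.2 r trivial hqr,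
      hs.1 p₀ trivial hp₀ r trivial hr]
  obtain ⟨ψ, hψ⟩ := (LinearMap.toSpanSingleton k N.Colimit _).exists_leftInverse_of_injective
    (LinearMap.ker_toSpanSingleton k hne)
  have hψ1 : ψ (j ⟨p₀, hp₀⟩ (s p₀)) = 1 := by simpa using LinearMap.congr_fun hψ 1
  refine ⟨s, fun p => if hp : p ∈ J then ψ.comp (j ⟨p, hp⟩) else 0, hs, fun p q h hq v => ?_,
    fun p hp => dif_neg hp, fun p hp => ?_⟩
  · by_cases hp : p ∈ J
    · simp [hp, hq, hj ⟨p, hp⟩ ⟨q, hq⟩ h v]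
    · have h0 : j ⟨q, hq⟩ (M.map h v) = 0 :=
        (congrArg (toColimit N ⟨q, hq⟩) ((Submodule.Quotient.mk_eq_zero _).mpr
          (map_mem_imFrom h hp v))).trans (map_zero _)
      simp [hp, hq, h0]
  · simp [hp, hconst ⟨p, hp⟩, hψ1]

theorem HasEssentialSection.isSummand_intervalModule (hJ : IsConvex J) (hne : J.Nonempty)
    (hdir : DirectedOn (· ≤ ·) J) (h : HasEssentialSection M J) :
    IsSummand (intervalModule k J hJ) M := by
  obtain ⟨s, f, hs, hf, hf0, hf1⟩ := h.exists_dual hne hdir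
  have hmem (p : P) (v : M.V p) : f p v ∈ kMod k J p := by
    by_cases hp : p ∈ J
    · simp [kMod, hp]
    · simp [hf0 p hp]
  let i : Hom (intervalModule k J hJ) M :=
    { app p := (LinearMap.toSpanSingleton k (M.V p) (s p)).comp (kMod k J p).subtype
      natural {p q} h := LinearMap.ext fun (c : kMod k J p) => by
        change M.map h ((c : k) • s p) = (intervalMap k J h c : k) • s q
        rw [map_smul]
        by_cases hp : p ∈ J
        · rw [hs.1 p trivial hp q trivial h]
          by_cases hq : q ∈ J
          · simp [intervalMap, hq]
          · simp [hs.2 q trivial hq]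
        · rw [Subtype.ext (kMod_coe_eq_zero k hp c) (a2 := (0 : kMod k J p))]
          simp }
  let r : Hom M (intervalModule k J hJ) :=
    { app p := (f p).codRestrict (kMod k J p) (hmem p)
      natural {p q} h := LinearMap.ext fun v => Subtype.ext <| by
        change (intervalMap k J h ⟨f p v, hmem p v⟩ : k) = f q (M.map h v)
        by_cases hq : q ∈ J
        · simp [intervalMap, hq, hf p q h hq v]
        · simp [intervalMap, hq, hf0 q hq] }
  refine ⟨i, r, fun p (c : kMod k J p) => Subtype.ext ?_⟩
  change f p ((c : k) • s p) = c
  by_cases hp : p ∈ J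
  · rw [map_smul, hf1 p hp, smul_eq_mul, mul_one]
  · rw [hf0 p hp, kMod_coe_eq_zero k hp c, LinearMap.zero_apply]

end Sections

section LinearOrders

variable {S : Type} [LinearOrder S] {N : PersistenceModule k S} {I : Set S} {p : S} {m : N.V p}

theorem exists_isSectionOn_finset (hI : IsConvex I) (hp : p ∈ I)
    (hker : ∀ q ∉ I, ∀ h : p ≤ q, N.map h m = 0)
    (him : ∀ q ∈ I, ∀ h : q ≤ p, m ∈ LinearMap.range (N.map h)) (F : Finset S) (hF : p ∈ F) :
    ∃ s, IsSectionOn N I F s ∧ s p = m := by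
  classical
  obtain ⟨u, hu, hmin⟩ := (F.filter (· ∈ I)).exists_minimal ⟨p, Finset.mem_filter.mpr ⟨hF, hp⟩⟩
  have hleast (q : S) (hq : q ∈ F) (hqI : q ∈ I) : u ≤ q :=
    (le_total u q).elim id (hmin (Finset.mem_filter.mpr ⟨hq, hqI⟩))
  have huI : u ∈ I := (Finset.mem_filter.mp hu).2
  obtain ⟨e, he⟩ := him u huI (hleast p hF hp)
  refine ⟨fun q => if h : u ≤ q then N.map h e else 0,
    ⟨fun q hq hqI r _ h => ?_, fun q _ hqI => ?_⟩,
    by simp only [hleast p hF hp, dif_pos, he]⟩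
  · simp only [hleast q hq hqI, (hleast q hq hqI).trans h, dif_pos, N.map_map]
  · dsimp only
    split_ifs with h
    · have hpq : p ≤ q := (le_total p q).resolve_right fun hqp => hqI (hI u q p h hqp huI hp)
      rw [← hker q hqI hpq, ← he, N.map_map]
    · rfl

theorem IsSectionOn.hasEssentialSection {s : ∀ q, N.V q} (hs : IsSectionOn N I Set.univ s)
    (hI : IsConvex I) (hp : p ∈ I) (hsp : s p ≠ 0)
    (hker : ∀ q ∈ I, ∀ h : p ≤ q, LinearMap.ker (N.map h) = ⊥)
    (him : ∀ q ∉ I, ∀ h : q ≤ p, s p ∉ LinearMap.range (N.map h)) :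
    HasEssentialSection N I := by
  refine ⟨s, hs, fun q hq hmem => ?_⟩
  have hs0 : s q ≠ 0 := fun h0 => (le_total p q).elim
    (fun h => hsp (LinearMap.ker_eq_bot'.mp (hker q hq h) _
      (by rw [hs.1 p trivial hp q trivial h, h0])))
    fun h => hsp (by rw [← hs.1 q trivial hq p trivial h, h0, map_zero])
  obtain ⟨c, hcI, hcq, v, hv⟩ := exists_map_eq_of_mem_imFrom
    (Std.Total.directedOn _) hmem hs0
  have hcp : c ≤ p := (le_total c p).resolve_right fun hpc => hcI (hI p c q hpc hcq hp hq)
  refine him c hcI hcp ⟨v, ?_⟩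
  rcases le_total p q with h | h
  · refine LinearMap.ker_eq_bot.mp (hker q hq h) ?_
    rw [N.map_map, hv, hs.1 p trivial hp q trivial h]
  · rw [← hs.1 q trivial hq p trivial h, ← hv, N.map_map]

theorem exists_hasEssentialSection_of_linearOrder [∀ q, FiniteDimensional k (N.V q)]
    (hm : m ≠ 0) : ∃ I, IsConvex I ∧ I.Nonempty ∧ HasEssentialSection N I := by
  let f (x : WithTop S) : Submodule k (N.V p) := kerOn N {q | x ≤ q} p
  let g (x : S) : Submodule k (N.V p) := imFrom N {q | q ≤ x} p
  have hf : Monotone f := fun x y h => kerOn_anti (fun q => h.trans) p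
  have hg : Monotone g := fun x y h => imFrom_mono (fun q hq => hq.trans h) p
  have hg_of_le (x : S) (h : p ≤ x) : g x = ⊤ := eq_top_iff.mpr fun v _ => by
    simpa only [N.map_self] using map_mem_imFrom (le_refl p) (A := {q | q ≤ x}) h v
  have hf_top : f ⊤ ≠ ⊥ := fun h =>
    hm ((Submodule.eq_bot_iff _).mp h m (mem_kerOn.mpr fun q _ hq => by simp at hq))
  obtain ⟨x₀, n, hn, hn0, hnf, hng⟩ := exists_mem_all_ne_bot hf hg hf_top
    (y₁ := p) fun x => (hg_of_le p le_rfl).symm ▸ le_top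
  have hker_le (q : S) (h : p ≤ q) : LinearMap.ker (N.map h) ≤ f q := fun v hv =>
    mem_kerOn.mpr fun r _ hqr => by
      rw [← N.map_map h (WithTop.coe_le_coe.mp hqr), LinearMap.mem_ker.mp hv, map_zero]
  let I : Set S := {x | f x = ⊥ ∧ f x₀ ⊓ g x ≠ ⊥}
  have hI : IsConvex I := fun x y z hxy hyz hx hz =>
    ⟨eq_bot_iff.mpr ((hf (WithTop.coe_le_coe.mpr hyz)).trans hz.1.le),
      fun h => hx.2 (eq_bot_iff.mpr ((inf_le_inf_left _ (hg hxy)).trans h.le))⟩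
  have hpg (x : S) (hx : p ≤ x) : f x₀ ⊓ g x ≠ ⊥ := fun h =>
    hn0 ((Submodule.eq_bot_iff _).mp h n ⟨hn, hg_of_le x hx ▸ trivial⟩)
  have hp : p ∈ I := ⟨(Submodule.eq_bot_iff _).mpr fun v hv => by
    simpa only [N.map_self] using mem_kerOn.mp hv p le_rfl (le_refl (p : WithTop S)), hpg p le_rfl⟩
  obtain ⟨s, hs, hsp⟩ := exists_isSectionOn_univ fun F => exists_isSectionOn_finset hI hp
    (m := n) (fun q hq h => mem_kerOn.mp (hnf q fun hq' => hq ⟨hq', hpg q h⟩) q h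
      (le_refl (q : WithTop S)))
    (fun q hq h => by
      by_contra hnot
      obtain ⟨c, hc, hcp, v, hv⟩ := exists_map_eq_of_mem_imFrom
        (Std.Total.directedOn _) (hng q hq.2) hn0
      exact hnot ⟨N.map hc v, by rw [N.map_map, hv]⟩) F
  refine ⟨I, hI, ⟨p, hp⟩, hs.hasEssentialSection hI hp (hsp ▸ hn0)
    (fun q hq h => eq_bot_iff.mpr ((hker_le q h).trans hq.1.le)) fun q hq h hmem => hq ⟨?_, ?_⟩⟩
  · exact eq_bot_iff.mpr ((hf (WithTop.coe_le_coe.mpr h)).trans hp.1.le)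
  · obtain ⟨v, hv⟩ := hmem
    exact fun hbot => hn0 ((Submodule.eq_bot_iff _).mp hbot n
      ⟨hn, hsp ▸ hv ▸ map_mem_imFrom (A := {r | r ≤ q}) h le_rfl v⟩)

end LinearOrders

section MiddleExactness

variable {S T : Type} [LinearOrder S] [LinearOrder T]

/-- Middle exactness of a persistence module over a subposet `Q` of a product of two linear
orders; for `Q ⊆ ℝ × ℝ` this is `MiddleExactSub`. -/
def MiddleExactOn (Q : Set (S × T)) (M : PersistenceModule k Q) : Prop :=
  ∀ (x x' : S) (y y' : T) (hx : x ≤ x') (hy : y ≤ y')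
    (ha : (x, y) ∈ Q) (hb : (x, y') ∈ Q) (hc : (x', y) ∈ Q) (hd : (x', y') ∈ Q),
    ∀ (mb : M.V ⟨(x, y'), hb⟩) (mc : M.V ⟨(x', y), hc⟩),
      M.map (show (⟨(x, y'), hb⟩ : Q) ≤ ⟨(x', y'), hd⟩ from ⟨hx, le_rfl⟩) mb =
      M.map (show (⟨(x', y), hc⟩ : Q) ≤ ⟨(x', y'), hd⟩ from ⟨le_rfl, hy⟩) mc →
      ∃ ma : M.V ⟨(x, y), ha⟩,
        M.map (show (⟨(x, y), ha⟩ : Q) ≤ ⟨(x, y'), hb⟩ from ⟨le_rfl, hy⟩) ma = mb ∧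
        M.map (show (⟨(x, y), ha⟩ : Q) ≤ ⟨(x', y), hc⟩ from ⟨hx, le_rfl⟩) ma = mc

variable {Q : Set (S × T)} {M : PersistenceModule k Q}

theorem MiddleExactOn.exists_lift (hM : MiddleExactOn Q M) {a b c d : Q} (hab : a ≤ b)
    (hac : a ≤ c) (hbd : b ≤ d) (hcd : c ≤ d) (hb : b.1.1 = a.1.1) (hc : c.1.2 = a.1.2)
    (hd₁ : d.1.1 = c.1.1) (hd₂ : d.1.2 = b.1.2) {mb : M.V b} {mc : M.V c}
    (h : M.map hbd mb = M.map hcd mc) : ∃ ma, M.map hab ma = mb ∧ M.map hac ma = mc := by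
  obtain ⟨⟨x, y⟩, ha⟩ := a
  obtain ⟨⟨_, y'⟩, _⟩ := b
  obtain ⟨⟨x', _⟩, _⟩ := c
  obtain ⟨⟨_, _⟩, hd⟩ := d
  dsimp only at hb hc hd₁ hd₂
  subst hb hc hd₁ hd₂
  exact hM _ _ _ _ hac.1 hab.2 ha _ _ hd mb mc h

theorem MiddleExactOn.of_isSummand {N : PersistenceModule k Q} (hM : MiddleExactOn Q M)
    (h : IsSummand N M) : MiddleExactOn Q N := by
  obtain ⟨i, r, hri⟩ := h
  intro x x' y y' hx hy ha hb hc hd mb mc h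
  obtain ⟨ma, hmb, hmc⟩ := hM x x' y y' hx hy ha hb hc hd (i.app _ mb) (i.app _ mc)
    (by rw [i.map_app, i.map_app, h])
  exact ⟨r.app _ ma, by rw [r.map_app, hmb, hri], by rw [r.map_app, hmc, hri]⟩

theorem IsFilter.exists_sup (hQ : IsFilter Q) (p q : Q) :
    ∃ r : Q, p ≤ r ∧ q ≤ r ∧ (r : S × T) = (p : S × T) ⊔ q :=
  ⟨⟨(p : S × T) ⊔ q, hQ p _ le_sup_left p.2⟩,
    le_sup_left (a := (p : S × T)), le_sup_right (a := (p : S × T)), rfl⟩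

theorem IsFilter.directedOn_prod (hQ : IsFilter Q) (JS : Set S) (JT : Set T) :
    DirectedOn (· ≤ ·) {q : Q | (q : S × T) ∈ JS ×ˢ JT} := fun p hp q hq => by
  obtain ⟨r, hpr, hqr, hr⟩ := hQ.exists_sup p q
  refine ⟨r, ?_, hpr, hqr⟩
  change (r : S × T) ∈ JS ×ˢ JT
  rw [hr]
  exact ⟨sup_ind (p := (· ∈ JS)) _ _ hp.1 hq.1, sup_ind (p := (· ∈ JT)) _ _ hp.2 hq.2⟩

theorem mem_kerOn_fst_of_map_eq_zero {p q : Q} (h : p ≤ q) (hpq : q.1.2 = p.1.2) {v : M.V p}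
    (hv : M.map h v = 0) : v ∈ kerOn M {r | q.1.1 ≤ r.1.1} p :=
  mem_kerOn.mpr fun r hpr hqr => by
    rw [← M.map_map h (show q ≤ r from ⟨hqr, hpq.trans_le hpr.2⟩), hv, map_zero]

theorem mem_kerOn_snd_of_map_eq_zero {p q : Q} (h : p ≤ q) (hpq : q.1.1 = p.1.1) {v : M.V p}
    (hv : M.map h v = 0) : v ∈ kerOn M {r | q.1.2 ≤ r.1.2} p :=
  mem_kerOn.mpr fun r hpr hqr => by
    rw [← M.map_map h (show q ≤ r from ⟨hpq.trans_le hpr.1, hqr⟩), hv, map_zero]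

end MiddleExactness

section GridExtension

theorem exists_isSectionOn_ge_or_notMem {P : Type} [Preorder P] {M : PersistenceModule k P}
    {J : Set P} (hJ : IsIdeal J) {p : P} {m : M.V p}
    (hm : ∀ q, ∀ h : p ≤ q, q ∉ J → M.map h m = 0) :
    ∃ s, IsSectionOn M Set.univ {q | p ≤ q ∨ q ∉ J} s ∧ s p = m ∧ ∀ q ∉ J, s q = 0 := by
  classical
  let s (q : P) : M.V q := if h : p ≤ q then M.map h m else 0
  have hs0 (q : P) (hq : q ∉ J) : s q = 0 := by
    by_cases h : p ≤ q
    · simp only [s, h, dif_pos, hm q h hq]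
    · simp only [s, h, dif_neg, not_false_eq_true]
  refine ⟨s, ⟨fun a ha _ b _ hab => ?_, by simp⟩,
    by simp only [s, le_rfl, dif_pos, M.map_self], hs0⟩
  rcases ha with hpa | haJ
  · simp only [s, hpa, hpa.trans hab, dif_pos, M.map_map]
  · rw [hs0 a haJ, hs0 b fun hb => haJ (hJ a b hab hb), map_zero]

theorem IsSectionOn.exists_extension {P : Type} [PartialOrder P] {M : PersistenceModule k P}
    {G U : Finset P} (hUG : U ⊆ G) {s : ∀ p, M.V p} (hs : IsSectionOn M Set.univ U s)
    (hU : ∀ u ∈ U, ∀ q ∈ G, u ≤ q → q ∈ U)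
    (hext : ∀ q ∈ G, q ∉ U → ∀ s, IsSectionOn M Set.univ {r | r ∈ G ∧ q < r} s →
      ∃ t : M.V q, ∀ r ∈ G, ∀ h : q < r, M.map h.le t = s r) :
    ∃ s', IsSectionOn M Set.univ G s' ∧ ∀ u ∈ U, s' u = s u := by
  classical
  induction hn : G \ U using Finset.strongInduction generalizing U s with
  | _ D ih =>
    rcases D.eq_empty_or_nonempty with rfl | hD
    · exact ⟨s, ⟨fun p hp _ q hq => hs.1 p (Finset.sdiff_eq_empty_iff_subset.mp hn hp) trivial q
        (Finset.sdiff_eq_empty_iff_subset.mp hn hq), by simp⟩, fun _ _ => rfl⟩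
    obtain ⟨q, hqD, hqmax⟩ := D.exists_maximal hD
    obtain ⟨hqG, hqU⟩ := Finset.mem_sdiff.mp (hn ▸ hqD)
    have habove (r : P) (hr : r ∈ G) (hqr : q < r) : r ∈ U := by
      by_contra hrU
      exact (hqmax (hn ▸ Finset.mem_sdiff.mpr ⟨hr, hrU⟩) hqr.le).not_gt hqr
    obtain ⟨t, ht⟩ := hext q hqG hqU s
      (hs.mono fun r hr => habove r hr.1 hr.2)
    have hne (r : P) (hr : r ∈ U) : r ≠ q := fun h => hqU (h ▸ hr)
    have hupdate : IsSectionOn M Set.univ (insert q U : Finset P) (Function.update s q t) := by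
      refine ⟨fun a ha _ b hb hab => ?_, by simp⟩
      rcases Finset.mem_insert.mp ha with rfl | haU <;>
        rcases Finset.mem_insert.mp hb with rfl | hbU
      · exact M.map_self hab _
      · rw [Function.update_self, Function.update_of_ne (hne b hbU)]
        exact ht b (hUG hbU) (hab.lt_of_ne (hne b hbU).symm)
      · exact absurd (hU a haU b hqG hab) hqU
      · rw [Function.update_of_ne (hne a haU), Function.update_of_ne (hne b hbU),
          hs.1 a haU trivial b hbU hab]
    have hss : G \ insert q U ⊂ D := by
      rw [Finset.sdiff_insert, hn]
      exact Finset.erase_ssubset hqD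
    have hup : ∀ u ∈ insert q U, ∀ r ∈ G, u ≤ r → r ∈ insert q U := fun u hu r hr hur => by
      rcases Finset.mem_insert.mp hu with rfl | hu
      · rcases hur.eq_or_lt with rfl | hlt
        · exact hu
        · exact Finset.mem_insert_of_mem (habove r hr hlt)
      · exact Finset.mem_insert_of_mem (hU u hu r hr hur)
    obtain ⟨s', hs', hs'U⟩ := ih (G \ insert q U) hss (Finset.insert_subset hqG hUG) hupdate hup
      (fun r hr hrU => hext r hr fun h => hrU (Finset.mem_insert_of_mem h)) rfl
    exact ⟨s', hs', fun u hu => by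
      rw [hs'U u (Finset.mem_insert_of_mem hu), Function.update_of_ne (hne u hu)]⟩

variable {S T : Type} [LinearOrder S] [LinearOrder T] {Q : Set (S × T)}
  {M : PersistenceModule k Q}

theorem MiddleExactOn.exists_lift_of_grid (hQ : IsFilter Q) (hM : MiddleExactOn Q M)
    {X : Finset S} {Y : Finset T} {q : Q} (hqX : q.1.1 ∈ X) (hqY : q.1.2 ∈ Y)
    (hX : ∃ x ∈ X, q.1.1 < x) (hY : ∃ y ∈ Y, q.1.2 < y) {s : ∀ r, M.V r}
    (hs : IsSectionOn M Set.univ {r | (r.1.1 ∈ X ∧ r.1.2 ∈ Y) ∧ q < r} s) :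
    ∃ t : M.V q, ∀ r : Q, r.1.1 ∈ X → r.1.2 ∈ Y → ∀ h : q < r, M.map h.le t = s r := by
  classical
  obtain ⟨x, hx, hxmin⟩ := (X.filter (q.1.1 < ·)).exists_minimal
    (hX.imp fun _ => Finset.mem_filter.mpr)
  obtain ⟨y, hy, hymin⟩ := (Y.filter (q.1.2 < ·)).exists_minimal
    (hY.imp fun _ => Finset.mem_filter.mpr)
  obtain ⟨hxX, hqx⟩ := Finset.mem_filter.mp hx
  obtain ⟨hyY, hqy⟩ := Finset.mem_filter.mp hy
  let b : Q := ⟨(q.1.1, y), hQ q _ ⟨le_rfl, hqy.le⟩ q.2⟩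
  let c : Q := ⟨(x, q.1.2), hQ q _ ⟨hqx.le, le_rfl⟩ q.2⟩
  let d : Q := ⟨(x, y), hQ q _ ⟨hqx.le, hqy.le⟩ q.2⟩
  have hqb : q < b := Prod.lt_iff.mpr (.inr ⟨le_rfl, hqy⟩)
  have hqc : q < c := Prod.lt_iff.mpr (.inl ⟨hqx, le_rfl⟩)
  have hbd : b ≤ d := ⟨hqx.le, le_rfl⟩
  have hcd : c ≤ d := ⟨le_rfl, hqy.le⟩
  have hsb (r : Q) (hr : b ≤ r) (hrX : r.1.1 ∈ X) (hrY : r.1.2 ∈ Y) : M.map hr (s b) = s r :=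
    hs.1 b ⟨⟨hqX, hyY⟩, hqb⟩ trivial r ⟨⟨hrX, hrY⟩, hqb.trans_le hr⟩ hr
  have hsc (r : Q) (hr : c ≤ r) (hrX : r.1.1 ∈ X) (hrY : r.1.2 ∈ Y) : M.map hr (s c) = s r :=
    hs.1 c ⟨⟨hxX, hqY⟩, hqc⟩ trivial r ⟨⟨hrX, hrY⟩, hqc.trans_le hr⟩ hr
  obtain ⟨t, htb, htc⟩ := hM.exists_lift hqb.le hqc.le hbd hcd rfl rfl rfl rfl
    ((hsb d hbd hxX hyY).trans (hsc d hcd hxX hyY).symm)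
  refine ⟨t, fun r hrX hrY h => ?_⟩
  rcases Prod.lt_iff.mp h with ⟨h₁, h₂⟩ | ⟨h₁, h₂⟩
  · have hr : c ≤ r := ⟨(le_total x r.1.1).elim id (hxmin (Finset.mem_filter.mpr ⟨hrX, h₁⟩)), h₂⟩
    rw [← hsc r hr hrX hrY, ← htc, M.map_map]
  · have hr : b ≤ r := ⟨h₁, (le_total y r.1.2).elim id (hymin (Finset.mem_filter.mpr ⟨hrY, h₂⟩))⟩
    rw [← hsb r hr hrX hrY, ← htb, M.map_map]

theorem MiddleExactOn.exists_isSectionOn_finset (hQ : IsFilter Q) (hM : MiddleExactOn Q M)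
    {JS : Set S} {JT : Set T} (hJS : IsIdeal JS) (hJT : IsIdeal JT) {xa : S} (hxa : xa ∉ JS)
    {ya : T} (hya : ya ∉ JT) {p : Q} {m : M.V p}
    (hm : ∀ q, ∀ h : p ≤ q, (q : S × T) ∉ JS ×ˢ JT → M.map h m = 0) (F : Finset Q) (hF : p ∈ F) :
    ∃ s, IsSectionOn M {q | (q : S × T) ∈ JS ×ˢ JT} F s ∧ s p = m := by
  classical
  let J : Set Q := {q | (q : S × T) ∈ JS ×ˢ JT}
  have hJ : IsIdeal J := fun a b hab hb => ⟨hJS _ _ hab.1 hb.1, hJT _ _ hab.2 hb.2⟩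
  let X : Finset S := insert xa (F.image fun q => q.1.1)
  let Y : Finset T := insert ya (F.image fun q => q.1.2)
  let G : Finset Q := (X ×ˢ Y).subtype (· ∈ Q)
  have hG (q : Q) : q ∈ G ↔ q.1.1 ∈ X ∧ q.1.2 ∈ Y := by simp [G]
  have hFG : F ⊆ G := fun q hq => (hG q).mpr
    ⟨Finset.mem_insert_of_mem (Finset.mem_image_of_mem _ hq),
      Finset.mem_insert_of_mem (Finset.mem_image_of_mem _ hq)⟩
  let U : Finset Q := G.filter fun q => p ≤ q ∨ q ∉ J
  obtain ⟨s, hs, hsp, hs0⟩ := exists_isSectionOn_ge_or_notMem hJ hm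
  have hsU : IsSectionOn M Set.univ U s := hs.mono fun q hq => (Finset.mem_filter.mp hq).2
  obtain ⟨s', hs', hs'U⟩ := hsU.exists_extension (Finset.filter_subset _ G)
    (fun u hu q hq huq => Finset.mem_filter.mpr ⟨hq, (Finset.mem_filter.mp hu).2.imp
      (fun h => h.trans huq) fun h hqJ => h (hJ u q huq hqJ)⟩)
    fun q hq hqU s hs => by
      have hqJ : q ∈ J := by
        by_contra h
        exact hqU (Finset.mem_filter.mpr ⟨hq, Or.inr h⟩)
      obtain ⟨hqX, hqY⟩ := (hG q).mp hq
      simp only [hG] at hs ⊢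
      obtain ⟨t, ht⟩ := hM.exists_lift_of_grid hQ hqX hqY
        ⟨xa, Finset.mem_insert_self _ _, lt_of_not_ge fun h => hxa (hJS _ _ h hqJ.1)⟩
        ⟨ya, Finset.mem_insert_self _ _, lt_of_not_ge fun h => hya (hJT _ _ h hqJ.2)⟩ hs
      exact ⟨t, fun r hr => ht r hr.1 hr.2⟩
  refine ⟨s', ⟨fun a ha _ b hb => hs'.1 a (hFG ha) trivial b (hFG hb), fun q hq hqJ => ?_⟩, ?_⟩
  · rw [hs'U q (Finset.mem_filter.mpr ⟨hFG hq, Or.inr hqJ⟩), hs0 q hqJ]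
  · rw [hs'U p (Finset.mem_filter.mpr ⟨hFG hF, Or.inl le_rfl⟩), hsp]

end GridExtension

section DeathBlocks

theorem imFrom_compl_eq_bot {P : Type} [Preorder P] {M : PersistenceModule k P} {J : Set P}
    (hJ : IsIdeal J) {q : P} (hq : q ∈ J) : imFrom M Jᶜ q = ⊥ :=
  eq_bot_iff.mpr <| iSup_le fun c => iSup_le fun h => iSup_le fun hc => absurd (hJ c q h hq) hc

variable {S T : Type} [LinearOrder S] [LinearOrder T] {Q : Set (S × T)}
  {M : PersistenceModule k Q}

/-- Some block has points in `Q` and carries an essential section of `M`. -/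
def HasEssentialBlock (M : PersistenceModule k Q) : Prop :=
  ∃ J : Set (S × T), IsBlock J ∧ {q : Q | (q : S × T) ∈ J}.Nonempty ∧
    HasEssentialSection M {q | (q : S × T) ∈ J}

theorem MiddleExactOn.exists_eq_add_of_map_eq_zero (hQ : IsFilter Q) (hM : MiddleExactOn Q M)
    {p q : Q} (h : p ≤ q) {m : M.V p} (hm : M.map h m = 0) :
    ∃ a ∈ kerOn M {r | q.1.2 ≤ r.1.2} p, ∃ b ∈ kerOn M {r | q.1.1 ≤ r.1.1} p, m = a + b := by
  let b : Q := ⟨(p.1.1, q.1.2), hQ p _ ⟨le_rfl, h.2⟩ p.2⟩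
  let c : Q := ⟨(q.1.1, p.1.2), hQ p _ ⟨h.1, le_rfl⟩ p.2⟩
  have hpb : p ≤ b := ⟨le_rfl, h.2⟩
  have hpc : p ≤ c := ⟨h.1, le_rfl⟩
  have hbq : b ≤ q := ⟨h.1, le_rfl⟩
  have hcq : c ≤ q := ⟨le_rfl, h.2⟩
  obtain ⟨a, hab, hac⟩ := hM.exists_lift hpb hpc hbq hcq rfl rfl rfl rfl
    (mb := 0) (mc := M.map hpc m) (by rw [map_zero, M.map_map, hm])
  exact ⟨a, mem_kerOn_snd_of_map_eq_zero hpb rfl hab, m - a,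
    mem_kerOn_fst_of_map_eq_zero hpc rfl (by rw [map_sub, hac, sub_self]),
    (add_sub_cancel a m).symm⟩

theorem MiddleExactOn.hasEssentialSection_of_isIdeal [∀ q, FiniteDimensional k (M.V q)]
    (hQ : IsFilter Q) (hM : MiddleExactOn Q M) {JS : Set S} {JT : Set T} (hJS : IsIdeal JS)
    (hJT : IsIdeal JT) {x : S} (hx : x ∉ JS) {y : T} (hy : y ∉ JT) {p : Q}
    (hp : (p : S × T) ∈ JS ×ˢ JT) {m : M.V p}
    (hm_in : ∀ q, ∀ h : p ≤ q, (q : S × T) ∈ JS ×ˢ JT → M.map h m ≠ 0)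
    (hm_out : ∀ q, ∀ h : p ≤ q, (q : S × T) ∉ JS ×ˢ JT → M.map h m = 0) :
    HasEssentialSection M {q | (q : S × T) ∈ JS ×ˢ JT} := by
  obtain ⟨s, hs, hsp⟩ := exists_isSectionOn_univ fun F hF =>
    hM.exists_isSectionOn_finset hQ hJS hJT hx hy hm_out F hF
  refine ⟨s, hs, fun q hq hmem => ?_⟩
  have hJ : IsIdeal {q : Q | (q : S × T) ∈ JS ×ˢ JT} := fun a b hab hb =>
    ⟨hJS _ _ hab.1 hb.1, hJT _ _ hab.2 hb.2⟩
  rw [imFrom_compl_eq_bot hJ hq, Submodule.mem_bot] at hmem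
  obtain ⟨r, hr, hpr, hqr⟩ := hQ.directedOn_prod JS JT p hp q hq
  exact hm_in r hpr hr (by rw [← hsp, hs.1 p trivial hp r trivial hpr,
    ← hs.1 q trivial hq r trivial hqr, hmem, map_zero])

theorem MiddleExactOn.hasEssentialBlock_of_kerOn_inf_ne_bot [∀ q, FiniteDimensional k (M.V q)]
    (hQ : IsFilter Q) (hM : MiddleExactOn Q M) {p : Q} {x₁ : S} {y₁ : T}
    (h : kerOn M {q | x₁ ≤ q.1.1} p ⊓ kerOn M {q | y₁ ≤ q.1.2} p ≠ ⊥) :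
    HasEssentialBlock M := by
  let g (y : T) : Submodule k (M.V p) := kerOn M {q | y ≤ q.1.2} p
  let f (x : S) : Submodule k (M.V p) := kerOn M {q | x ≤ q.1.1} p ⊓ g y₁
  have hg : Monotone g := fun x y h => kerOn_anti (fun q => h.trans) p
  have hf : Monotone f := fun x y h => inf_le_inf_right _ (kerOn_anti (fun q => h.trans) p)
  obtain ⟨x₀, m, hm, hm0, hmf, hmg⟩ := exists_mem_all_ne_bot hf hg h (y₁ := y₁)
    fun x => inf_le_right
  let JS : Set S := {x | f x = ⊥}
  let JT : Set T := {y | f x₀ ⊓ g y = ⊥}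
  have hJS : IsIdeal JS := fun x x' h h' => eq_bot_iff.mpr ((hf h).trans h'.le)
  have hJT : IsIdeal JT := fun y y' h h' =>
    eq_bot_iff.mpr ((inf_le_inf_left _ (hg h)).trans h'.le)
  have hy₁ : y₁ ∉ JT := fun h => hm0 ((Submodule.eq_bot_iff _).mp h m ⟨hm, hm.2⟩)
  have hm_out (q : Q) (hpq : p ≤ q) (hq : (q : S × T) ∉ JS ×ˢ JT) : M.map hpq m = 0 := by
    rcases not_and_or.mp hq with hx | hy
    · exact mem_kerOn.mp (hmf _ hx).1 q hpq le_rfl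
    · exact mem_kerOn.mp (hmg _ hy) q hpq le_rfl
  have hm_in (q : Q) (hpq : p ≤ q) (hq : (q : S × T) ∈ JS ×ˢ JT) : M.map hpq m ≠ 0 := by
    intro h0
    obtain ⟨a, ha, b, hb, rfl⟩ := hM.exists_eq_add_of_map_eq_zero hQ hpq h0
    have hay : a ∈ g y₁ := hg (not_le.mp fun h => hy₁ (hJT _ _ h hq.2)).le ha
    have hb0 : b = 0 := (Submodule.eq_bot_iff _).mp hq.1 b
      ⟨hb, by simpa using (g y₁).sub_mem hm.2 hay⟩
    rw [hb0, add_zero] at hm hm0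
    exact hm0 ((Submodule.eq_bot_iff _).mp hq.2 a ⟨hm, ha⟩)
  have hp : (p : S × T) ∈ JS ×ˢ JT := by
    by_contra h
    exact hm0 (by simpa only [M.map_self] using hm_out p le_rfl h)
  exact ⟨JS ×ˢ JT, ⟨⟨p, hp⟩, .inl ⟨JS, JT, ⟨⟨_, hp.1⟩, hJS.isConvex⟩, hJS, ⟨⟨_, hp.2⟩,
    hJT.isConvex⟩, hJT, rfl⟩⟩, ⟨p, hp⟩,
    hM.hasEssentialSection_of_isIdeal hQ hJS hJT h hy₁ hp hm_in hm_out⟩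

end DeathBlocks

section VerticallyConstant

variable {S T : Type} [LinearOrder S] [LinearOrder T] {Q : Set (S × T)}

theorem apply_rangeSplitting_le {α β : Type} [Preorder β] (f : α → β) {x y : Set.range f}
    (h : x ≤ y) : f (Set.rangeSplitting f x) ≤ f (Set.rangeSplitting f y) := by
  simpa only [Set.apply_rangeSplitting, Subtype.coe_le_coe] using h

/-- All structure maps between points with the same first coordinate are bijective. -/
def IsVerticallyConstant (M : PersistenceModule k Q) : Prop :=
  ∀ ⦃p q : Q⦄ (h : p ≤ q), p.1.1 = q.1.1 → Function.Bijective (M.map h)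

variable {M : PersistenceModule k Q}

/-- For a vertically constant module, the map `M.V p → M.V q` obtained from the structure maps to
`(q.1, p.2 ⊔ q.2)` by inverting the vertical one; it is defined as soon as `p.1 ≤ q.1`. -/
noncomputable def transport (hM : IsVerticallyConstant M) (hQ : IsFilter Q) {p q : Q}
    (h : p.1.1 ≤ q.1.1) : M.V p →ₗ[k] M.V q :=
  let t : Q := ⟨(q.1.1, p.1.2 ⊔ q.1.2), hQ q _ ⟨le_rfl, le_sup_right⟩ q.2⟩
  (LinearEquiv.ofBijective (M.map (show q ≤ t from ⟨le_rfl, le_sup_right⟩))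
    (hM _ rfl)).symm.toLinearMap.comp (M.map (show p ≤ t from ⟨h, le_sup_left⟩))

variable {hM : IsVerticallyConstant M} {hQ : IsFilter Q}

theorem map_transport {p q t : Q} (h : p.1.1 ≤ q.1.1) (hpt : p ≤ t) (hqt : q ≤ t)
    (ht : q.1.1 = t.1.1) (v : M.V p) : M.map hqt (transport hM hQ h v) = M.map hpt v := by
  let u : Q := ⟨(q.1.1, p.1.2 ⊔ q.1.2), hQ q _ ⟨le_rfl, le_sup_right⟩ q.2⟩
  have hqu : q ≤ u := ⟨le_rfl, le_sup_right⟩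
  have hpu : p ≤ u := ⟨h, le_sup_left⟩
  have hut : u ≤ t := ⟨ht.le, sup_le hpt.2 hqt.2⟩
  rw [← M.map_map hqu hut, ← M.map_map hpu hut]
  exact congrArg _ (LinearEquiv.apply_symm_apply (LinearEquiv.ofBijective _ (hM hqu rfl)) _)

theorem transport_of_le {p q : Q} (h : p ≤ q) (v : M.V p) :
    transport hM hQ h.1 v = M.map h v := by
  rw [← map_transport (hM := hM) (hQ := hQ) h.1 h le_rfl rfl, M.map_self]

theorem transport_transport {p q r : Q} (hpq : p.1.1 ≤ q.1.1) (hqr : q.1.1 ≤ r.1.1) (v : M.V p) :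
    transport hM hQ hqr (transport hM hQ hpq v) = transport hM hQ (hpq.trans hqr) v := by
  let y : T := p.1.2 ⊔ (q.1.2 ⊔ r.1.2)
  let t : Q := ⟨(r.1.1, y), hQ r _ ⟨le_rfl, le_sup_right.trans le_sup_right⟩ r.2⟩
  let u : Q := ⟨(q.1.1, y), hQ q _ ⟨le_rfl, le_sup_left.trans le_sup_right⟩ q.2⟩
  have hrt : r ≤ t := ⟨le_rfl, le_sup_right.trans le_sup_right⟩
  have hqu : q ≤ u := ⟨le_rfl, le_sup_left.trans le_sup_right⟩
  have hpu : p ≤ u := ⟨hpq, le_sup_left⟩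
  have hut : u ≤ t := ⟨hqr, le_rfl⟩
  refine (hM hrt rfl).injective ?_
  rw [map_transport hqr (hqu.trans hut) hrt rfl, map_transport _ (hpu.trans hut) hrt rfl,
    ← M.map_map hqu hut, map_transport hpq hpu hqu rfl, M.map_map]

theorem transport_self {p : Q} (v : M.V p) : transport hM hQ (le_refl p.1.1) v = v :=
  (transport_of_le (le_refl p) v).trans (M.map_self le_rfl v)

/-- The restriction of a vertically constant module to a choice of one point in each column of `Q`,
as a module on the projection of `Q` to the first axis. -/
noncomputable def columnModule (hM : IsVerticallyConstant M) (hQ : IsFilter Q) :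
    PersistenceModule k (Set.range fun q : Q => q.1.1) where
  V x := M.V (Set.rangeSplitting _ x)
  map h := transport hM hQ (apply_rangeSplitting_le (fun q : Q => q.1.1) h)
  map_refl _ := LinearMap.ext fun v => transport_self v
  map_trans hxy hyz := LinearMap.ext fun v => Eq.symm <|
    transport_transport (apply_rangeSplitting_le (fun q : Q => q.1.1) hxy)
      (apply_rangeSplitting_le (fun q : Q => q.1.1) hyz) v

/-- The isomorphism between two fibres in the same column of a vertically constant module. -/
noncomputable def transportEquiv (hM : IsVerticallyConstant M) (hQ : IsFilter Q) {p q : Q}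
    (h : p.1.1 = q.1.1) : M.V p ≃ₗ[k] M.V q :=
  LinearEquiv.ofLinearMap (transport hM hQ h.le) (transport hM hQ h.ge)
    (LinearMap.ext fun v => by simp [transport_transport, transport_self])
    (LinearMap.ext fun v => by simp [transport_transport, transport_self])

theorem IsVerticallyConstant.exists_hasEssentialSection [∀ q, FiniteDimensional k (M.V q)]
    (hM : IsVerticallyConstant M) (hQ : IsFilter Q) {p : Q} {v : M.V p} (hv : v ≠ 0) :
    ∃ JS : Set S, IsConvex JS ∧ {q : Q | q.1.1 ∈ JS}.Nonempty ∧
      HasEssentialSection M {q | q.1.1 ∈ JS} := by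
  let x := Set.rangeFactorization fun q : Q => q.1.1
  have hx (q : Q) : q.1.1 = (Set.rangeSplitting _ (x q)).1.1 :=
    (Set.apply_rangeSplitting _ (x q)).symm
  let N := columnModule hM hQ
  let e (q : Q) : M.V q ≃ₗ[k] N.V (x q) := transportEquiv hM hQ (hx q)
  have he (p q : Q) (h : p ≤ q) (v : M.V p) : e q (M.map h v) = N.map h.1 (e p v) := by
    rw [← transport_of_le (hM := hM) (hQ := hQ) h]
    exact (transport_transport h.1 (hx q).le v).trans
      (transport_transport (hx p).le (apply_rangeSplitting_le (fun q : Q => q.1.1) h.1) v).symm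
  have (a : Set.range fun q : Q => q.1.1) : FiniteDimensional k (N.V a) :=
    inferInstanceAs (FiniteDimensional k (M.V (Set.rangeSplitting _ a)))
  obtain ⟨I, hI, hne, h⟩ := exists_hasEssentialSection_of_linearOrder ((e p).map_ne_zero_iff.mpr hv)
  have hpre : {q : Q | q.1.1 ∈ Subtype.val '' I} = x ⁻¹' I :=
    Set.ext fun q => Subtype.val_injective.mem_set_image (a := x q)
  refine ⟨Subtype.val '' I, ?_, ?_, hpre ▸ h.comap (fun _ _ h => h.1) e he⟩
  · rintro _ b _ hab hbc ⟨a, ha, rfl⟩ ⟨c, hc, rfl⟩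
    obtain ⟨q, hq⟩ := a.2
    have hb : b ∈ Set.range fun q : Q => q.1.1 :=
      ⟨⟨(b, q.1.2), hQ q _ ⟨hq.trans_le hab, le_rfl⟩ q.2⟩, rfl⟩
    exact ⟨⟨b, hb⟩, hI a ⟨b, hb⟩ c hab hbc ha hc, rfl⟩
  · rw [hpre]
    exact hne.preimage Set.rangeFactorization_surjective

end VerticallyConstant

section Strips

variable {S T : Type} [LinearOrder S] [LinearOrder T] {Q : Set (S × T)}

/-- The vectors of `M.V p` killed by all maps to points sufficiently far to the right. -/
def dyingRight (M : PersistenceModule k Q) (p : Q) : Submodule k (M.V p) :=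
  ⨆ x : S, kerOn M {r | x ≤ r.1.1} p

variable {M : PersistenceModule k Q}

theorem mem_dyingRight {p : Q} {v : M.V p} :
    v ∈ dyingRight M p ↔ ∃ x : S, v ∈ kerOn M {r | x ≤ r.1.1} p := by
  have : Nonempty S := ⟨p.1.1⟩
  exact Submodule.mem_iSup_of_directed (fun x : S => kerOn M {r | x ≤ r.1.1} p)
    (Monotone.directed_le fun _ _ h => kerOn_anti (fun _ => h.trans) p)

theorem map_mem_dyingRight {p q : Q} (h : p ≤ q) (v : M.V p) (hv : v ∈ dyingRight M p) :
    M.map h v ∈ dyingRight M q :=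
  mem_dyingRight.mpr ((mem_dyingRight.mp hv).imp fun _ => map_mem_kerOn h)

theorem MiddleExactOn.isVerticallyConstant_dyingRight (hQ : IsFilter Q) (hM : MiddleExactOn Q M)
    (hinf : ∀ p x y, kerOn M {r | x ≤ r.1.1} p ⊓ kerOn M {r | y ≤ r.1.2} p = ⊥) :
    IsVerticallyConstant (ofSubmodule M (dyingRight M) map_mem_dyingRight) := by
  intro p q h hpq
  refine ⟨(injective_iff_map_eq_zero _).mpr fun ⟨v, hv⟩ h0 => Subtype.ext ?_, fun ⟨w, hw⟩ => ?_⟩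
  · obtain ⟨x, hx⟩ := mem_dyingRight.mp hv
    exact (Submodule.eq_bot_iff _).mp (hinf p x q.1.2) v
      ⟨hx, mem_kerOn_snd_of_map_eq_zero h hpq.symm (congrArg Subtype.val h0)⟩
  · obtain ⟨x, hx⟩ := mem_dyingRight.mp hw
    let c : Q := ⟨(x ⊔ p.1.1, p.1.2), hQ p _ ⟨le_sup_right, le_rfl⟩ p.2⟩
    let d : Q := ⟨(x ⊔ p.1.1, q.1.2), hQ q _ ⟨hpq.symm.trans_le le_sup_right, le_rfl⟩ q.2⟩
    have hpc : p ≤ c := ⟨le_sup_right, le_rfl⟩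
    have hqd : q ≤ d := ⟨hpq.symm.trans_le le_sup_right, le_rfl⟩
    have hcd : c ≤ d := ⟨le_rfl, h.2⟩
    obtain ⟨v, hv, hv0⟩ := hM.exists_lift h hpc hqd hcd hpq.symm rfl rfl rfl (mb := w) (mc := 0)
      (by rw [mem_kerOn.mp hx d hqd le_sup_left, map_zero])
    exact ⟨⟨v, mem_dyingRight.mpr ⟨_, mem_kerOn_fst_of_map_eq_zero hpc rfl hv0⟩⟩, Subtype.ext hv⟩

theorem MiddleExactOn.hasEssentialSection_of_dyingRight (hQ : IsFilter Q) (hM : MiddleExactOn Q M)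
    {JS : Set S} (h : HasEssentialSection (ofSubmodule M (dyingRight M) map_mem_dyingRight)
      {q | q.1.1 ∈ JS}) :
    HasEssentialSection M {q | q.1.1 ∈ JS} := by
  obtain ⟨s, hs, hess⟩ := h
  refine ⟨fun q => (s q).1, ⟨fun p _ hp q _ h =>
    congrArg Subtype.val (hs.1 p trivial hp q trivial h),
    fun q _ hq => congrArg Subtype.val (hs.2 q trivial hq)⟩, fun q hq hmem => ?_⟩
  have hs0 : (s q).1 ≠ 0 := fun h0 =>
    hess q hq ((Subtype.ext h0 : s q = 0) ▸ Submodule.zero_mem _)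
  have hdir : DirectedOn (· ≤ ·) {c ∈ {c : Q | c.1.1 ∈ JS}ᶜ | c ≤ q} := by
    convert hQ.directedOn_prod {x | x ∉ JS ∧ x ≤ q.1.1} (Set.Iic q.1.2) using 1
    exact Set.ext fun c => and_assoc.symm
  obtain ⟨c, hc, hcq, e, he⟩ := exists_map_eq_of_mem_imFrom hdir hmem hs0
  obtain ⟨x, hx⟩ := mem_dyingRight.mp (s q).2
  let d : Q := ⟨(x ⊔ q.1.1, q.1.2), hQ q _ ⟨le_sup_right, le_rfl⟩ q.2⟩
  have hqd : q ≤ d := ⟨le_sup_right, le_rfl⟩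
  obtain ⟨a, ha, b, hb, rfl⟩ := hM.exists_eq_add_of_map_eq_zero hQ (hcq.trans hqd) (m := e)
    (by rw [← M.map_map hcq hqd, he, mem_kerOn.mp hx d hqd le_sup_left])
  rw [map_add, mem_kerOn.mp ha q hcq le_rfl, zero_add] at he
  have hb' : b ∈ dyingRight M c := mem_dyingRight.mpr ⟨_, hb⟩
  have hbs : (ofSubmodule M (dyingRight M) map_mem_dyingRight).map hcq ⟨b, hb'⟩ = s q :=
    Subtype.ext he
  exact hess q hq (hbs ▸ map_mem_imFrom hcq hc _)

theorem MiddleExactOn.hasEssentialBlock_of_kerOn_fst_ne_bot [∀ q, FiniteDimensional k (M.V q)]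
    (hQ : IsFilter Q) (hM : MiddleExactOn Q M)
    (hinf : ∀ p x y, kerOn M {r | x ≤ r.1.1} p ⊓ kerOn M {r | y ≤ r.1.2} p = ⊥) {p : Q} {x : S}
    (h : kerOn M {r | x ≤ r.1.1} p ≠ ⊥) : HasEssentialBlock M := by
  obtain ⟨v, hv, hv0⟩ := (Submodule.ne_bot_iff _).mp h
  obtain ⟨JS, hJS, ⟨q, hq⟩, hess⟩ := (hM.isVerticallyConstant_dyingRight hQ hinf
    ).exists_hasEssentialSection hQ (v := (⟨v, mem_dyingRight.mpr ⟨x, hv⟩⟩ : dyingRight M p))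
    fun h0 => hv0 (congrArg Subtype.val h0)
  have hpre : {q : Q | (q : S × T) ∈ JS ×ˢ Set.univ} = {q | q.1.1 ∈ JS} :=
    Set.ext fun q => and_iff_left trivial
  refine ⟨JS ×ˢ Set.univ, ⟨⟨q, hq, trivial⟩, .inr (.inr (.inl ⟨JS, ⟨⟨_, hq⟩, hJS⟩, rfl⟩))⟩, ?_⟩
  rw [hpre]
  exact ⟨⟨q, hq⟩, hM.hasEssentialSection_of_dyingRight hQ hess⟩

end Strips

section Swap

variable {S T : Type} [LinearOrder S] [LinearOrder T] {Q : Set (S × T)}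
  {M : PersistenceModule k Q}

/-- The module on the transposed poset. -/
abbrev swapModule (M : PersistenceModule k Q) : PersistenceModule k (Prod.swap ⁻¹' Q) where
  V q := M.V ⟨q.1.swap, q.2⟩
  map h := M.map (show _ ≤ _ from ⟨h.2, h.1⟩)
  map_refl _ := M.map_refl _
  map_trans _ _ := M.map_trans _ _

theorem IsFilter.preimage_swap (hQ : IsFilter Q) : IsFilter (Prod.swap ⁻¹' Q) :=
  fun _ _ h => hQ _ _ ⟨h.2, h.1⟩

theorem MiddleExactOn.swap (hM : MiddleExactOn Q M) :
    MiddleExactOn (Prod.swap ⁻¹' Q) (swapModule M) :=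
  fun x x' y y' hx hy ha hb hc hd mb mc h =>
    (hM y y' x x' hy hx ha hc hb hd mc mb h.symm).imp fun _ => And.symm

theorem kerOn_swapModule {A : Set Q} {p : Prod.swap ⁻¹' Q} :
    kerOn (swapModule M) {q | ⟨q.1.swap, q.2⟩ ∈ A} p = kerOn M A ⟨p.1.swap, p.2⟩ :=
  le_antisymm
    (fun _ hv => (mem_kerOn (M := M) (p := ⟨p.1.swap, p.2⟩)).mpr fun q hpq hq =>
      (mem_kerOn (M := swapModule M)).mp hv ⟨q.1.swap, q.2⟩ ⟨hpq.2, hpq.1⟩ hq)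
    fun _ hv => mem_kerOn.mpr fun q hpq hq => mem_kerOn.mp hv ⟨q.1.swap, q.2⟩ ⟨hpq.2, hpq.1⟩ hq

theorem IsBlock.preimage_swap {J : Set (T × S)} (hJ : IsBlock J) : IsBlock (Prod.swap ⁻¹' J) := by
  obtain ⟨hne, h⟩ := hJ
  refine ⟨hne.preimage Prod.swap_surjective, ?_⟩
  rcases h with ⟨A, B, hA, hA', hB, hB', rfl⟩ | ⟨A, B, hA, hA', hB, hB', rfl⟩ | ⟨A, hA, rfl⟩ |
    ⟨A, hA, rfl⟩ <;> rw [Set.preimage_swap_prod]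
  · exact .inl ⟨B, A, hB, hB', hA, hA', rfl⟩
  · exact .inr (.inl ⟨B, A, hB, hB', hA, hA', rfl⟩)
  · exact .inr (.inr (.inr ⟨A, hA, rfl⟩))
  · exact .inr (.inr (.inl ⟨A, hA, rfl⟩))

theorem HasEssentialBlock.of_swapModule (h : HasEssentialBlock (swapModule M)) :
    HasEssentialBlock M := by
  obtain ⟨J, hJ, ⟨q, hq⟩, hess⟩ := h
  exact ⟨Prod.swap ⁻¹' J, hJ.preimage_swap, ⟨⟨q.1.swap, q.2⟩, hq⟩,
    hess.comap (φ := fun q : Q => ⟨q.1.swap, q.2⟩) (fun _ _ h => ⟨h.2, h.1⟩)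
      (fun q => LinearEquiv.refl k (M.V q)) fun _ _ _ _ => rfl⟩

theorem MiddleExactOn.hasEssentialBlock_of_kerOn_snd_ne_bot [∀ q, FiniteDimensional k (M.V q)]
    (hQ : IsFilter Q) (hM : MiddleExactOn Q M)
    (hinf : ∀ p x y, kerOn M {r | x ≤ r.1.1} p ⊓ kerOn M {r | y ≤ r.1.2} p = ⊥) {p : Q} {y : T}
    (h : kerOn M {r | y ≤ r.1.2} p ≠ ⊥) : HasEssentialBlock M := by
  have (q : Prod.swap ⁻¹' Q) : FiniteDimensional k ((swapModule M).V q) :=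
    inferInstanceAs (FiniteDimensional k (M.V _))
  refine .of_swapModule (hM.swap.hasEssentialBlock_of_kerOn_fst_ne_bot hQ.preimage_swap
    (fun p y x => ?_) (p := ⟨p.1.swap, p.2⟩) (x := y) ?_)
  · have := hinf ⟨p.1.swap, p.2⟩ x y
    rwa [inf_comm, ← kerOn_swapModule, ← kerOn_swapModule] at this
  · exact (kerOn_swapModule (A := {r | y ≤ r.1.2}) (p := ⟨p.1.swap, p.2⟩)).trans_ne h

end Swap

section BirthBlocks

/-- The subspace of the colimit generated by the images of the fibres at points of `A`. -/
noncomputable def spanOn {P : Type} [Preorder P] (M : PersistenceModule k P) (A : Set P) :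
    Submodule k M.Colimit :=
  ⨆ q ∈ A, LinearMap.range (toColimit M q)

section Directed

variable {P : Type} [Preorder P] {M : PersistenceModule k P} {A B : Set P}

theorem range_toColimit_mono {p q : P} (h : p ≤ q) :
    LinearMap.range (toColimit M p) ≤ LinearMap.range (toColimit M q) := by
  rintro _ ⟨v, rfl⟩
  exact ⟨M.map h v, toColimit_map M h v⟩

theorem range_toColimit_le_spanOn {q : P} (hq : q ∈ A) :
    LinearMap.range (toColimit M q) ≤ spanOn M A :=
  le_iSup₂_of_le q hq le_rfl

theorem spanOn_mono (h : A ⊆ B) : spanOn M A ≤ spanOn M B :=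
  biSup_mono h

theorem spanOn_union : spanOn M (A ∪ B) = spanOn M A ⊔ spanOn M B :=
  iSup_union

theorem exists_mem_range_of_mem_spanOn (hA : DirectedOn (· ≤ ·) A) {w : M.Colimit}
    (hw : w ∈ spanOn M A) (hw0 : w ≠ 0) : ∃ q ∈ A, w ∈ LinearMap.range (toColimit M q) := by
  rcases A.eq_empty_or_nonempty with rfl | hne
  · exact absurd (by simpa [spanOn] using hw) hw0
  · have := hne.to_subtype
    have hdir : Directed (· ≤ ·) fun q : A => LinearMap.range (toColimit M (q : P)) :=
      hA.directed_val.mono_comp (· ≤ ·) (fun _ _ => range_toColimit_mono)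
    rw [spanOn, iSup_subtype'] at hw
    exact ((Submodule.mem_iSup_of_directed _ hdir).mp hw).elim fun q hq => ⟨q, q.2, hq⟩

theorem spanOn_inf_eq_bot (hA : DirectedOn (· ≤ ·) A) {N : Submodule k M.Colimit}
    (h : ∀ q ∈ A, LinearMap.range (toColimit M q) ⊓ N = ⊥) : spanOn M A ⊓ N = ⊥ := by
  refine (Submodule.eq_bot_iff _).mpr fun w ⟨hwA, hwN⟩ => ?_
  by_contra hw0
  obtain ⟨q, hq, hwq⟩ := exists_mem_range_of_mem_spanOn hA hwA hw0
  exact hw0 ((Submodule.eq_bot_iff _).mp (h q hq) w ⟨hwq, hwN⟩)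

theorem imFrom_le_comap_toColimit (q : P) :
    imFrom M A q ≤ (spanOn M A).comap (toColimit M q) := by
  refine iSup_le fun c => iSup_le fun h => iSup_le fun hc => ?_
  rintro _ ⟨v, rfl⟩
  rw [Submodule.mem_comap, toColimit_map]
  exact range_toColimit_le_spanOn hc (LinearMap.mem_range_self _ v)

variable [IsDirectedOrder P]

theorem toColimit_injective (hinj : ∀ p q (h : p ≤ q), Function.Injective (M.map h)) (p : P) :
    Function.Injective (toColimit M p) :=
  (injective_iff_map_eq_zero _).mpr fun _ hv =>
    let ⟨q, h, hq⟩ := exists_map_eq_zero_of_toColimit_eq_zero M hv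
    (map_eq_zero_iff _ (hinj p q h)).mp hq

theorem hasEssentialSection_of_notMem_spanOn
    (hinj : ∀ p q (h : p ≤ q), Function.Injective (M.map h)) {J : Set P} (hJ : IsFilter J)
    {w : M.Colimit} (hw : ∀ q ∈ J, w ∈ LinearMap.range (toColimit M q))
    (hw' : w ∉ spanOn M Jᶜ) : HasEssentialSection M J := by
  classical
  choose s hs using hw
  refine ⟨fun q => if hq : q ∈ J then s q hq else 0, ⟨fun p _ hp q _ h => ?_, fun q _ hq => ?_⟩,
    fun q hq hmem => hw' ?_⟩
  · have hq := hJ p q h hp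
    refine toColimit_injective hinj q ?_
    simp only [dif_pos hp, dif_pos hq, toColimit_map, hs]
  · exact dif_neg hq
  · simpa only [dif_pos hq, Submodule.mem_comap, hs] using imFrom_le_comap_toColimit q hmem

end Directed

variable {S T : Type} [LinearOrder S] [LinearOrder T] {Q : Set (S × T)}
  {M : PersistenceModule k Q}

theorem IsFilter.isDirectedOrder (hQ : IsFilter Q) : IsDirectedOrder Q :=
  ⟨fun p q => (hQ.exists_sup p q).imp fun _ h => ⟨h.1, h.2.1⟩⟩

theorem MiddleExactOn.range_toColimit_inf_le [IsDirectedOrder Q] (hQ : IsFilter Q)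
    (hM : MiddleExactOn Q M) (hinj : ∀ p q (h : p ≤ q), Function.Injective (M.map h)) {p q r : Q}
    (hp : p.1.1 ≤ r.1.1) (hq : q.1.2 ≤ r.1.2) :
    LinearMap.range (toColimit M p) ⊓ LinearMap.range (toColimit M q) ≤
      LinearMap.range (toColimit M r) := by
  rcases le_total p.1.2 r.1.2 with hp' | hp'
  · exact inf_le_of_left_le (range_toColimit_mono ⟨hp, hp'⟩)
  rcases le_total q.1.1 r.1.1 with hq' | hq'
  · exact inf_le_of_right_le (range_toColimit_mono ⟨hq', hq⟩)
  let b : Q := ⟨(r.1.1, p.1.2), hQ r _ ⟨le_rfl, hp'⟩ r.2⟩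
  let c : Q := ⟨(q.1.1, r.1.2), hQ r _ ⟨hq', le_rfl⟩ r.2⟩
  let d : Q := ⟨(q.1.1, p.1.2), hQ r _ ⟨hq', hp'⟩ r.2⟩
  have hrb : r ≤ b := ⟨le_rfl, hp'⟩
  have hrc : r ≤ c := ⟨hq', le_rfl⟩
  have hbd : b ≤ d := ⟨hq', le_rfl⟩
  have hcd : c ≤ d := ⟨le_rfl, hp'⟩
  rintro w ⟨hwp, hwq⟩
  obtain ⟨v, rfl⟩ := range_toColimit_mono (show p ≤ b from ⟨hp, le_rfl⟩) hwp
  obtain ⟨u, hu⟩ := range_toColimit_mono (show q ≤ c from ⟨le_rfl, hq⟩) hwq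
  obtain ⟨t, ht, -⟩ := hM.exists_lift hrb hrc hbd hcd rfl rfl rfl rfl (mb := v) (mc := u)
    (toColimit_injective hinj d (by rw [toColimit_map, toColimit_map, hu]))
  exact ⟨t, by rw [← ht, toColimit_map]⟩

theorem IsFilter.directedOn_fst (hQ : IsFilter Q) (JS : Set S) :
    DirectedOn (· ≤ ·) {q : Q | q.1.1 ∈ JS} := by
  convert hQ.directedOn_prod JS Set.univ using 1
  exact Set.ext fun q => (and_iff_left trivial).symm

theorem IsFilter.directedOn_snd (hQ : IsFilter Q) (JT : Set T) :
    DirectedOn (· ≤ ·) {q : Q | q.1.2 ∈ JT} := by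
  convert hQ.directedOn_prod Set.univ JT using 1
  exact Set.ext fun q => (and_iff_right trivial).symm

theorem MiddleExactOn.spanOn_inf_le_range [IsDirectedOrder Q] (hQ : IsFilter Q)
    (hM : MiddleExactOn Q M) (hinj : ∀ p q (h : p ≤ q), Function.Injective (M.map h)) (r : Q) :
    spanOn M {q | q.1.1 ≤ r.1.1} ⊓ spanOn M {q | q.1.2 ≤ r.1.2} ≤
      LinearMap.range (toColimit M r) := by
  rintro w ⟨hwX, hwY⟩
  by_cases hw0 : w = 0
  · exact hw0 ▸ Submodule.zero_mem _
  obtain ⟨p, hp, hwp⟩ := exists_mem_range_of_mem_spanOn (hQ.directedOn_fst (Set.Iic _)) hwX hw0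
  obtain ⟨q, hq, hwq⟩ := exists_mem_range_of_mem_spanOn (hQ.directedOn_snd (Set.Iic _)) hwY hw0
  exact hM.range_toColimit_inf_le hQ hinj hp hq ⟨hwp, hwq⟩

theorem MiddleExactOn.notMem_spanOn_compl [IsDirectedOrder Q] (hQ : IsFilter Q)
    (hM : MiddleExactOn Q M) (hinj : ∀ p q (h : p ≤ q), Function.Injective (M.map h))
    {JS : Set S} {JT : Set T} {p : Q} (hJS : ∀ x ∉ JS, x ≤ p.1.1) (hJT : ∀ y ∉ JT, y ≤ p.1.2)
    (hX : ∀ q : Q, q.1.1 ∉ JS →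
      LinearMap.range (toColimit M q) ⊓ LinearMap.range (toColimit M p) = ⊥)
    {N : Submodule k M.Colimit} (hN : N ≤ LinearMap.range (toColimit M p))
    (hY : ∀ q : Q, q.1.2 ∉ JT → LinearMap.range (toColimit M q) ⊓ N = ⊥) {w : M.Colimit}
    (hw : w ∈ N) (hw0 : w ≠ 0) : w ∉ spanOn M {q | (q : S × T) ∈ JS ×ˢ JT}ᶜ := by
  have hcompl : {q : Q | (q : S × T) ∈ JS ×ˢ JT}ᶜ = {q | q.1.1 ∈ JSᶜ} ∪ {q | q.1.2 ∈ JTᶜ} :=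
    Set.ext fun q => not_and_or
  rw [hcompl, spanOn_union]
  intro hmem
  obtain ⟨a, ha, b, hb, rfl⟩ := Submodule.mem_sup.mp hmem
  have hbY : b ∈ spanOn M {q | q.1.2 ≤ p.1.2} := spanOn_mono (fun q hq => hJT _ hq) hb
  have haY : a ∈ spanOn M {q | q.1.2 ≤ p.1.2} := by
    have hpY : LinearMap.range (toColimit M p) ≤ spanOn M {q | q.1.2 ≤ p.1.2} :=
      range_toColimit_le_spanOn (le_refl p.1.2)
    exact (Submodule.add_mem_iff_left _ hbY).mp (hpY (hN hw))
  have hap : a ∈ LinearMap.range (toColimit M p) :=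
    hM.spanOn_inf_le_range hQ hinj p ⟨spanOn_mono (fun q hq => hJS _ hq) ha, haY⟩
  have ha0 : a = 0 := (Submodule.eq_bot_iff _).mp
    (spanOn_inf_eq_bot (hQ.directedOn_fst JSᶜ) hX) a ⟨ha, hap⟩
  rw [ha0, zero_add] at hw hw0
  exact hw0 ((Submodule.eq_bot_iff _).mp
    (spanOn_inf_eq_bot (hQ.directedOn_snd JTᶜ) hY) b ⟨hb, hw⟩)

theorem MiddleExactOn.hasEssentialBlock_of_injective [∀ q, FiniteDimensional k (M.V q)]
    (hQ : IsFilter Q) (hM : MiddleExactOn Q M)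
    (hinj : ∀ p q (h : p ≤ q), Function.Injective (M.map h)) {p : Q} {v : M.V p} (hv : v ≠ 0) :
    HasEssentialBlock M := by
  have := hQ.isDirectedOrder
  let R (q : Q) : Submodule k M.Colimit := LinearMap.range (toColimit M q)
  let f (x : S) : Submodule k M.Colimit := R p ⊓ spanOn M {q | q.1.1 ≤ x}
  let g (y : T) : Submodule k M.Colimit := spanOn M {q | q.1.2 ≤ y}
  have hf : Monotone f := fun x y h => inf_le_inf_left _ (spanOn_mono fun q hq => hq.trans h)
  have hg : Monotone g := fun x y h => spanOn_mono fun q hq => hq.trans h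
  have hR : R p ≠ ⊥ := (Submodule.ne_bot_iff _).mpr ⟨_, LinearMap.mem_range_self _ v,
    (map_ne_zero_iff _ (toColimit_injective hinj p)).mpr hv⟩
  have hfp : f p.1.1 = R p := inf_eq_left.mpr (range_toColimit_le_spanOn (le_refl p.1.1))
  have hRg : R p ≤ g p.1.2 := range_toColimit_le_spanOn (le_refl p.1.2)
  have (x : S) : FiniteDimensional k (f x) := Submodule.finiteDimensional_of_le inf_le_left
  obtain ⟨x₀, w, hw, hw0, hwf, hwg⟩ := exists_mem_all_ne_bot hf hg (hfp ▸ hR)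
    (fun x => inf_le_left.trans hRg)
  let JS : Set S := {x | f x ≠ ⊥}
  let JT : Set T := {y | f x₀ ⊓ g y ≠ ⊥}
  have hJS : IsFilter JS := fun x y h hx => ne_bot_of_le_ne_bot hx (hf h)
  have hJT : IsFilter JT := fun x y h hx => ne_bot_of_le_ne_bot hx (inf_le_inf_left _ (hg h))
  have hp₁ : p.1.1 ∈ JS := hfp.trans_ne hR
  have hp₂ : p.1.2 ∈ JT := (Submodule.ne_bot_iff _).mpr ⟨w, ⟨hw, hRg hw.1⟩, hw0⟩
  have hmem (q : Q) (hq : (q : S × T) ∈ JS ×ˢ JT) : w ∈ R q :=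
    hM.spanOn_inf_le_range hQ hinj q ⟨(hwf _ hq.1).2, hwg _ hq.2⟩
  have hnotMem : w ∉ spanOn M {q | (q : S × T) ∈ JS ×ˢ JT}ᶜ :=
    hM.notMem_spanOn_compl hQ hinj
      (fun x hx => (not_le.mp fun h => hx (hJS _ _ h hp₁)).le)
      (fun y hy => (not_le.mp fun h => hy (hJT _ _ h hp₂)).le)
      (fun q hq => eq_bot_mono
        (le_inf inf_le_right (inf_le_of_left_le (range_toColimit_le_spanOn (le_refl q.1.1))))
        (not_not.mp hq)) inf_le_left
      (fun q hq => eq_bot_mono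
        (le_inf inf_le_right (inf_le_of_left_le (range_toColimit_le_spanOn (le_refl q.1.2))))
        (not_not.mp hq)) hw hw0
  exact ⟨JS ×ˢ JT, ⟨⟨p, hp₁, hp₂⟩, .inr (.inl ⟨JS, JT, ⟨⟨_, hp₁⟩, hJS.isConvex⟩, hJS,
    ⟨⟨_, hp₂⟩, hJT.isConvex⟩, hJT, rfl⟩)⟩, ⟨p, hp₁, hp₂⟩,
    hasEssentialSection_of_notMem_spanOn hinj
      (fun a b h ha => ⟨hJS _ _ h.1 ha.1, hJT _ _ h.2 ha.2⟩) hmem hnotMem⟩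

end BirthBlocks

section BlockDecomposition

variable {S T : Type} [LinearOrder S] [LinearOrder T] {Q : Set (S × T)}
  {M : PersistenceModule k Q}

theorem MiddleExactOn.injective_of_kerOn_eq_bot (hQ : IsFilter Q) (hM : MiddleExactOn Q M)
    (hfst : ∀ (p : Q) x, kerOn M {r | x ≤ r.1.1} p = ⊥)
    (hsnd : ∀ (p : Q) y, kerOn M {r | y ≤ r.1.2} p = ⊥) {p q : Q} (h : p ≤ q) :
    Function.Injective (M.map h) := by
  refine (injective_iff_map_eq_zero _).mpr fun m hm => ?_
  obtain ⟨a, ha, b, hb, rfl⟩ := hM.exists_eq_add_of_map_eq_zero hQ h hm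
  rw [hsnd, Submodule.mem_bot] at ha
  rw [hfst, Submodule.mem_bot] at hb
  rw [ha, hb, add_zero]

theorem MiddleExactOn.hasEssentialBlock [∀ q, FiniteDimensional k (M.V q)] (hQ : IsFilter Q)
    (hM : MiddleExactOn Q M) {p : Q} {v : M.V p} (hv : v ≠ 0) : HasEssentialBlock M := by
  by_cases hinf : ∀ (p : Q) x y, kerOn M {r | x ≤ r.1.1} p ⊓ kerOn M {r | y ≤ r.1.2} p = ⊥
  · by_cases hfst : ∀ (p : Q) x, kerOn M {r | x ≤ r.1.1} p = ⊥
    · by_cases hsnd : ∀ (p : Q) y, kerOn M {r | y ≤ r.1.2} p = ⊥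
      · exact hM.hasEssentialBlock_of_injective hQ
          (fun _ _ => hM.injective_of_kerOn_eq_bot hQ hfst hsnd) hv
      · push Not at hsnd
        obtain ⟨q, y, h⟩ := hsnd
        exact hM.hasEssentialBlock_of_kerOn_snd_ne_bot hQ hinf h
    · push Not at hfst
      obtain ⟨q, x, h⟩ := hfst
      exact hM.hasEssentialBlock_of_kerOn_fst_ne_bot hQ hinf h
  · push Not at hinf
    obtain ⟨q, x, y, h⟩ := hinf
    exact hM.hasEssentialBlock_of_kerOn_inf_ne_bot hQ h

theorem IsBlock.exists_eq_prod {J : Set (S × T)} (hJ : IsBlock J) :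
    ∃ JS JT, J = JS ×ˢ JT := by
  rcases hJ.2 with ⟨JS, JT, -, -, -, -, rfl⟩ | ⟨JS, JT, -, -, -, -, rfl⟩ | ⟨JS, -, rfl⟩ |
    ⟨JT, -, rfl⟩
  exacts [⟨JS, JT, rfl⟩, ⟨JS, JT, rfl⟩, ⟨JS, _, rfl⟩, ⟨_, JT, rfl⟩]

theorem IsFilter.directedOn_preimage_block (hQ : IsFilter Q) {J : Set (S × T)} (hJ : IsBlock J) :
    DirectedOn (· ≤ ·) {q : Q | (q : S × T) ∈ J} := by
  obtain ⟨JS, JT, rfl⟩ := hJ.exists_eq_prod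
  exact hQ.directedOn_prod JS JT

theorem not_isZero_intervalModule {P : Type} [Preorder P] {I : Set P} (hI : IsConvex I)
    (hne : I.Nonempty) : ¬IsZero (intervalModule k I hI) := by
  obtain ⟨p, hp⟩ := hne
  exact fun h => one_ne_zero (congrArg Subtype.val (h p (kGen k hp)))

theorem MiddleExactOn.exists_isomorphic_block [∀ q, FiniteDimensional k (M.V q)]
    (hQ : IsFilter Q) (hM : MiddleExactOn Q M) (hind : Indecomposable M) :
    ∃ (J : Set (S × T)) (hJ : IsBlock J), Isomorphic M
      (intervalModule k {q : Q | (q : S × T) ∈ J} (hJ.isConvex.preimage Q)) := by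
  obtain ⟨p, v, hv⟩ : ∃ p, ∃ v : M.V p, v ≠ 0 := by simpa only [IsZero, not_forall] using hind.1
  obtain ⟨J, hJ, hne, h⟩ := hM.hasEssentialBlock hQ hv
  exact ⟨J, hJ, (h.isSummand_intervalModule _ hne (hQ.directedOn_preimage_block hJ)).isomorphic
    hind (not_isZero_intervalModule _ hne)⟩

end BlockDecomposition

theorem isFilter_upperT : IsFilter upperT :=
  fun _ _ h hp => lt_of_lt_of_le hp (add_le_add h.1 h.2)

end PMod

open PMod in
theorem stmt3_general {k : Type} [Field k] {S T : Type} [LinearOrder S] [LinearOrder T]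
    {Q : Set (S × T)} (hQ : IsFilter Q) (M : PersistenceModule k Q)
    (hfd : ∀ p, FiniteDimensional k (M.V p)) (hme : MiddleExactOn Q M) :
    ∃ (ι : Type) (J : ι → Set (S × T)) (hJ : ∀ i, IsBlock (J i)),
      Isomorphic M (directSum fun i =>
        intervalModule k {p : Q | (p : S × T) ∈ J i} ((hJ i).isConvex.preimage Q)) := by
  obtain ⟨ι, N, hMN, hN⟩ := exists_isomorphic_directSum_indecomposable M
  have hsum (i : ι) : IsSummand (N i) M := hMN.isSummand_of_directSum i
  have (i : ι) (p : Q) : FiniteDimensional k ((N i).V p) := (hsum i).finiteDimensional p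
  choose J hJ hNJ using fun i => (hme.of_isSummand (hsum i)).exists_isomorphic_block hQ (hN i)
  exact ⟨ι, J, hJ, hMN.trans (isomorphic_directSum_congr hNJ)⟩

open PMod in
/-- Theorem 1.4 (strictly upper-triangular case): pointwise finite-dimensional middle
exact modules over the strictly upper-triangular subposet of the plane decompose into
restrictions of block modules. -/
theorem stmt3 {k : Type} [Field k] (M : PersistenceModule k ↥upperT)
    (hfd : ∀ p, FiniteDimensional k (M.V p)) (hme : MiddleExactSub upperT M) :
    ∃ (ι : Type) (J : ι → Set (ℝ × ℝ)) (hJ : ∀ i, IsBlock (J i)),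
      Isomorphic M (directSum fun i =>
        intervalModule k {p : ↥upperT | (p : ℝ × ℝ) ∈ J i}
          ((hJ i).isConvex.preimageSub upperT)) :=
  stmt3_general isFilter_upperT M hfd hme
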